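/- arXiv:2512.23121 — 6 statements merged into one kernel-verified Lean document; each statement's English description precedes it below -/
import Mathlib

section
/- Let V be a finite set of variables and let A and B be nonempty finite families of subsets of V. For a valuation v : V → ℝ define f_A(v) = max_{S ∈ A} Σ_{x ∈ S} v(x), and define f_B analogously. Then f_A(v) = f_B(v) for every valuation v : V → ℝ if and only if A = B. -/
/-!
Each set `S` is the unique maximiser, among all subsets of `V`, of the linear functional given by
the valuation equal to `1` on `S` and `-1` off `S` (`S` is a vertex of the cube). Hence if `S ∈ A`
and `f_A = f_B`, the maximum of `f_B` at this valuation is at least `|S|`, and the member of `B`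
attaining it must be `S` itself (`mem_of_sup'_eq`). The claim follows by symmetry in `A` and `B`.
-/

/-- Under the `±1` valuation attached to `S`, only `S` itself reaches the value `|S|`. -/
lemma eq_of_card_le_sum_sign {V : Type*} [DecidableEq V] (S T : Finset V)
    (h : (S.card : ℝ) ≤ ∑ x ∈ T, (if x ∈ S then (1 : ℝ) else -1)) : T = S := by
  have hsum : ∑ x ∈ T, (if x ∈ S then (1 : ℝ) else -1)
      = ((T ∩ S).card : ℝ) - ((T \ S).card : ℝ) := by
    rw [Finset.sum_ite, Finset.filter_mem_eq_inter, Finset.filter_notMem_eq_sdiff]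
    simp [sub_eq_add_neg]
  rw [hsum] at h
  have h1 : S.card + (T \ S).card ≤ (T ∩ S).card := by
    have : (S.card : ℝ) + ((T \ S).card : ℝ) ≤ ((T ∩ S).card : ℝ) := by linarith
    exact_mod_cast this
  have h2 : (T ∩ S).card ≤ S.card := Finset.card_le_card Finset.inter_subset_right
  have h3 : T ⊆ S := Finset.sdiff_eq_empty_iff_subset.mp (Finset.card_eq_zero.mp (by omega))
  exact Finset.eq_of_subset_of_card_le h3
    (by have := Finset.card_le_card (Finset.inter_subset_left : T ∩ S ⊆ T); omega)

lemma mem_of_sup'_eq {V : Type*} [DecidableEq V]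
    (A B : Finset (Finset V)) (hA : A.Nonempty) (hB : B.Nonempty)
    (h : ∀ v : V → ℝ, A.sup' hA (fun S => ∑ x ∈ S, v x)
        = B.sup' hB (fun S => ∑ x ∈ S, v x)) {S : Finset V} (hS : S ∈ A) : S ∈ B := by
  let v : V → ℝ := fun x => if x ∈ S then 1 else -1
  obtain ⟨T, hT, hTmax⟩ := Finset.exists_mem_eq_sup' hB (fun S => ∑ x ∈ S, v x)
  have hle : ∑ x ∈ S, v x ≤ ∑ x ∈ T, v x :=
    (Finset.le_sup' (fun S => ∑ x ∈ S, v x) hS).trans (((h v).trans hTmax).le)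
  have hval : ∑ x ∈ S, v x = S.card := by
    rw [Finset.sum_congr rfl (fun x hx => if_pos hx)]
    simp
  exact eq_of_card_le_sum_sign S T (hval ▸ hle) ▸ hT

/-- Let `V` be a finite set of variables and `A`, `B` nonempty finite
families of subsets of `V`. With `f_A(v) = max_{S ∈ A} Σ_{x ∈ S} v x` (and `f_B`
analogously), we have `f_A = f_B` (for all valuations `v : V → ℝ`) iff `A = B`. -/
theorem stmt_3 {V : Type*} [Fintype V] [DecidableEq V]
    (A B : Finset (Finset V)) (hA : A.Nonempty) (hB : B.Nonempty) :
    (∀ v : V → ℝ, A.sup' hA (fun S => ∑ x ∈ S, v x)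
        = B.sup' hB (fun S => ∑ x ∈ S, v x)) ↔ A = B := by
  constructor
  · intro h
    ext S
    exact ⟨mem_of_sup'_eq A B hA hB h, mem_of_sup'_eq B A hB hA fun v => (h v).symm⟩
  · rintro rfl v
    rfl
end

section
/- Let k ≥ 2 and let (P₁, P₂) be a rectangle of the matching compatibility matrix M_k. Then there exists a rectangle cover of M_k of size at most ⌈(k!·(k−1)!/(|P₁|·|P₂|))·2k·ln k⌉. -/
/-!
The matrix `M_k` is invariant under the substitutions `(ρ₁, ρ₂) ↦ (σ ρ₁ τ⁻¹, τ ρ₂ σ⁻¹)`, which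
conjugate `ρ₂ ρ₁` by `τ`; hence every translate of `(P₁, P₂)` is again a rectangle.

For two fixed one-entries there are at least `k` pairs `(σ, τ)` moving the first to the second:
any two `k`-cycles `c`, `d` are conjugate, and if `τ₀ c τ₀⁻¹ = d` then each `τ₀ cⁱ` with `i < k`
conjugates `c` to `d` as well, while `σ` is determined by `τ` (`le_card_carry`). So each one-entry
lies in a fraction at least `q = |P₁| |P₂| k / (k!)² = |P₁| |P₂| / (k! (k-1)!)` of the `(k!)²`
translates.

By averaging, some translate covers a fraction `q` of any given set of one-entries. Choosing `t`
translates greedily leaves at most `(1 - q)ᵗ (k!)² ≤ exp (-q t) (k!)²` one-entries uncovered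
(`exists_greedy`). Once `q t ≥ 2 k log k` this is less than `1`, because `k! < k ^ k`, and so all
one-entries are covered.
-/

/-- A rectangle of the matching compatibility matrix `M_k`: a pair of nonempty sets
`P₁, P₂ ⊆ S_k` such that `ρ₂ ∘ ρ₁` is a single `k`-cycle for all `ρ₁ ∈ P₁, ρ₂ ∈ P₂`. -/
def IsRect (k : ℕ) (P₁ P₂ : Finset (Equiv.Perm (Fin k))) : Prop :=
  P₁.Nonempty ∧ P₂.Nonempty ∧
    ∀ ρ₁ ∈ P₁, ∀ ρ₂ ∈ P₂, (ρ₂ * ρ₁).cycleType = ({k} : Multiset ℕ)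

/-- A rectangle cover of `M_k`: a family of rectangles covering every pair
`(ρ₁, ρ₂)` with `ρ₂ ∘ ρ₁` a single `k`-cycle. Its size is its cardinality. -/
def IsRectCover (k : ℕ)
    (R : Finset (Finset (Equiv.Perm (Fin k)) × Finset (Equiv.Perm (Fin k)))) : Prop :=
  (∀ r ∈ R, IsRect k r.1 r.2) ∧
    ∀ ρ₁ ρ₂ : Equiv.Perm (Fin k), (ρ₂ * ρ₁).cycleType = ({k} : Multiset ℕ) →
      ∃ r ∈ R, ρ₁ ∈ r.1 ∧ ρ₂ ∈ r.2

open Classical in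
/-- If every point of `U` is covered by at least a fraction `q` of the sets `{x | M g x}`, then
some `t` of these sets leave at most `exp (-q t) |U|` points of `U` uncovered. -/
lemma exists_greedy {G X : Type*} [Fintype G] [Nonempty G] (U : Finset X) (M : G → X → Prop)
    (q : ℝ) (h : ∀ x ∈ U, q * Fintype.card G ≤ ((Finset.univ.filter fun g => M g x).card : ℝ))
    (t : ℕ) :
    ∃ T : Finset G, T.card ≤ t ∧
      ((U.filter fun x => ∀ g ∈ T, ¬ M g x).card : ℝ) ≤ Real.exp (-(q * t)) * U.card := by
  induction t with
  | zero => exact ⟨∅, by simp, by simp⟩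
  | succ t ih =>
    obtain ⟨T, hT, hU⟩ := ih
    set V := U.filter fun x => ∀ g ∈ T, ¬ M g x with hV
    -- Double counting of the incidences between `G` and `V`.
    have hsum : ∑ _g : G, q * (V.card : ℝ) ≤ ∑ g : G, ((V.filter fun x => M g x).card : ℝ) := by
      have e : ∑ g : G, ((V.filter fun x => M g x).card : ℝ)
          = ∑ x ∈ V, ((Finset.univ.filter fun g => M g x).card : ℝ) := by
        exact_mod_cast Finset.sum_card_bipartiteAbove_eq_sum_card_bipartiteBelow M
          (s := Finset.univ) (t := V)
      rw [e]
      have := Finset.card_nsmul_le_sum V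
        (fun x => ((Finset.univ.filter fun g => M g x).card : ℝ)) _
        (fun x hx => h x (Finset.mem_filter.1 hx).1)
      simp only [Finset.sum_const, nsmul_eq_mul, Finset.card_univ] at this ⊢
      linarith
    obtain ⟨g, -, hg⟩ := Finset.exists_le_of_sum_le Finset.univ_nonempty hsum
    refine ⟨insert g T, (Finset.card_insert_le _ _).trans (by omega), ?_⟩
    have e1 : (U.filter fun x => ∀ g' ∈ insert g T, ¬ M g' x) = V.filter fun x => ¬ M g x := by
      ext x
      simp only [hV, Finset.mem_filter, Finset.forall_mem_insert]
      tauto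
    have e2 : ((V.filter fun x => M g x).card : ℝ) + (V.filter fun x => ¬ M g x).card = V.card := by
      exact_mod_cast Finset.card_filter_add_card_filter_not (s := V) (fun x => M g x)
    rw [e1]
    calc ((V.filter fun x => ¬ M g x).card : ℝ) ≤ (1 - q) * V.card := by linarith
      _ ≤ Real.exp (-q) * V.card := by
        gcongr
        linarith [Real.add_one_le_exp (-q)]
      _ ≤ Real.exp (-q) * (Real.exp (-(q * t)) * U.card) := by gcongr
      _ = Real.exp (-(q * (t + 1 : ℕ))) * U.card := by
        rw [← mul_assoc, ← Real.exp_add]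
        congr 2
        push_cast
        ring

open Classical in
/-- If the bound of `exists_greedy` is less than `1`, then the `t` chosen sets cover `U`. -/
lemma exists_cover {G X : Type*} [Fintype G] [Nonempty G] (U : Finset X) (M : G → X → Prop)
    (q : ℝ) (h : ∀ x ∈ U, q * Fintype.card G ≤ ((Finset.univ.filter fun g => M g x).card : ℝ))
    (t : ℕ) (hlt : Real.exp (-(q * t)) * U.card < 1) :
    ∃ T : Finset G, T.card ≤ t ∧ ∀ x ∈ U, ∃ g ∈ T, M g x := by
  obtain ⟨T, hT, hcov⟩ := exists_greedy U M q h t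
  have hempty := Finset.card_eq_zero.1 (Nat.cast_lt_one.1 (hcov.trans_lt hlt))
  refine ⟨T, hT, fun x hx => ?_⟩
  simpa using Finset.filter_eq_empty_iff.1 hempty hx

/-- At least `k` pairs `(σ, τ)` carry one given one-entry of `M_k` to another. -/
lemma le_card_carry {k : ℕ} {ρ₁ ρ₂ a₁ a₂ : Equiv.Perm (Fin k)}
    (hρ : (ρ₂ * ρ₁).cycleType = {k}) (ha : (a₂ * a₁).cycleType = {k}) :
    k ≤ (Finset.univ.filter fun g : Equiv.Perm (Fin k) × Equiv.Perm (Fin k) =>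
      g.1 * ρ₁ * g.2⁻¹ = a₁ ∧ g.2 * ρ₂ * g.1⁻¹ = a₂).card := by
  obtain ⟨τ, hτ⟩ := isConj_iff.1 (Equiv.Perm.isConj_iff_cycleType_eq.2 (hρ.trans ha.symm))
  have ho : orderOf (ρ₂ * ρ₁) = k := by
    rw [← Equiv.Perm.lcm_cycleType, hρ]
    simp
  set c := ρ₂ * ρ₁ with hc
  have hρ₂ : ρ₂ = c * ρ₁⁻¹ := by simp [hc]
  have ha₂ : a₂ = τ * c * τ⁻¹ * a₁⁻¹ := by simp [hτ]
  have := Finset.card_le_card_of_injOn (s := Finset.range k)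
    (t := Finset.univ.filter fun g : Equiv.Perm (Fin k) × Equiv.Perm (Fin k) =>
      g.1 * ρ₁ * g.2⁻¹ = a₁ ∧ g.2 * ρ₂ * g.1⁻¹ = a₂)
    (fun i => (a₁ * (τ * c ^ i) * ρ₁⁻¹, τ * c ^ i)) ?_ ?_
  · simpa using this
  · intro i _
    have hcomm : c ^ i * c = c * c ^ i := ((Commute.refl c).pow_left i).eq
    simp only [Finset.coe_filter, Finset.mem_univ, true_and, Set.mem_ofPred_eq]
    constructor
    · group
    · rw [hρ₂, ha₂]
      calc τ * c ^ i * (c * ρ₁⁻¹) * (a₁ * (τ * c ^ i) * ρ₁⁻¹)⁻¹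
          = τ * (c ^ i * c) * (c ^ i)⁻¹ * τ⁻¹ * a₁⁻¹ := by
            simp only [mul_inv_rev, inv_inv, mul_assoc, inv_mul_cancel_left]
        _ = τ * c * τ⁻¹ * a₁⁻¹ := by
            rw [hcomm]
            simp only [mul_assoc, mul_inv_cancel_left]
  · intro i hi j hj hij
    have h2 := mul_left_cancel (Prod.ext_iff.1 hij).2
    refine pow_injOn_Iio_orderOf ?_ ?_ h2
    · simpa [ho] using hi
    · simpa [ho] using hj

/-- Each one-entry of `M_k` is carried into the rectangle `(P₁, P₂)` by at least `|P₁| |P₂| k`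
pairs `(σ, τ)`. -/
lemma le_card_carry_rect {k : ℕ} {P₁ P₂ : Finset (Equiv.Perm (Fin k))} (hR : IsRect k P₁ P₂)
    {ρ₁ ρ₂ : Equiv.Perm (Fin k)} (hρ : (ρ₂ * ρ₁).cycleType = {k}) :
    P₁.card * P₂.card * k ≤
      (Finset.univ.filter fun g : Equiv.Perm (Fin k) × Equiv.Perm (Fin k) =>
        g.1 * ρ₁ * g.2⁻¹ ∈ P₁ ∧ g.2 * ρ₂ * g.1⁻¹ ∈ P₂).card := by
  rw [← Finset.card_product, mul_comm]
  refine Finset.mul_card_image_le_card_of_maps_to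
    (f := fun g => (g.1 * ρ₁ * g.2⁻¹, g.2 * ρ₂ * g.1⁻¹)) ?_ _ ?_
  · intro g hg
    simpa using hg
  · rintro ⟨a₁, a₂⟩ ha
    rw [Finset.mem_product] at ha
    refine (le_card_carry hρ (hR.2.2 a₁ ha.1 a₂ ha.2)).trans (Finset.card_le_card ?_)
    intro g hg
    simp only [Finset.mem_filter, Finset.mem_univ, true_and] at hg ⊢
    exact ⟨⟨hg.1 ▸ ha.1, hg.2 ▸ ha.2⟩, Prod.ext hg.1 hg.2⟩

/-- The translate of `(P₁, P₂)` by `g = (σ, τ)`: the pairs `(ρ₁, ρ₂)` with `σ ρ₁ τ⁻¹ ∈ P₁` and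
`τ ρ₂ σ⁻¹ ∈ P₂`. -/
def rectTranslate {k : ℕ} (P₁ P₂ : Finset (Equiv.Perm (Fin k)))
    (g : Equiv.Perm (Fin k) × Equiv.Perm (Fin k)) :
    Finset (Equiv.Perm (Fin k)) × Finset (Equiv.Perm (Fin k)) :=
  (Finset.univ.filter fun ρ => g.1 * ρ * g.2⁻¹ ∈ P₁,
    Finset.univ.filter fun ρ => g.2 * ρ * g.1⁻¹ ∈ P₂)

lemma isRect_rectTranslate {k : ℕ} {P₁ P₂ : Finset (Equiv.Perm (Fin k))} (hR : IsRect k P₁ P₂)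
    (g : Equiv.Perm (Fin k) × Equiv.Perm (Fin k)) :
    IsRect k (rectTranslate P₁ P₂ g).1 (rectTranslate P₁ P₂ g).2 := by
  obtain ⟨⟨a₁, h₁⟩, ⟨a₂, h₂⟩, h⟩ := hR
  refine ⟨⟨g.1⁻¹ * a₁ * g.2, ?_⟩, ⟨g.2⁻¹ * a₂ * g.1, ?_⟩, ?_⟩
  · simpa [rectTranslate, mul_assoc] using h₁
  · simpa [rectTranslate, mul_assoc] using h₂
  · intro ρ₁ hρ₁ ρ₂ hρ₂
    simp only [rectTranslate, Finset.mem_filter, Finset.mem_univ, true_and] at hρ₁ hρ₂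
    have := h _ hρ₁ _ hρ₂
    rwa [show g.2 * ρ₂ * g.1⁻¹ * (g.1 * ρ₁ * g.2⁻¹) = g.2 * (ρ₂ * ρ₁) * g.2⁻¹ by group,
      Equiv.Perm.cycleType_conj] at this

lemma factorial_lt_pow_self {k : ℕ} (hk : 2 ≤ k) : k.factorial < k ^ k := by
  obtain ⟨m, rfl⟩ : ∃ m, k = m + 1 := ⟨k - 1, by omega⟩
  rw [Nat.factorial_succ, pow_succ']
  have h1 : m ^ m < (m + 1) ^ m := Nat.pow_lt_pow_left (by omega) (by omega)
  exact Nat.mul_lt_mul_of_pos_left (m.factorial_le_pow.trans_lt h1) (by omega)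

/-- Let `k ≥ 2` and let `(P₁, P₂)` be a rectangle of `M_k`. Then there is
a rectangle cover of `M_k` of size at most `⌈(k!·(k-1)!/(|P₁|·|P₂|))·2k·ln k⌉`. -/
theorem stmt_4 (k : ℕ) (hk : 2 ≤ k)
    (P₁ P₂ : Finset (Equiv.Perm (Fin k))) (hR : IsRect k P₁ P₂) :
    ∃ R, IsRectCover k R ∧
      (R.card : ℤ) ≤
        ⌈((k.factorial * (k - 1).factorial : ℝ) / ((P₁.card : ℝ) * (P₂.card : ℝ)))
          * (2 * k * Real.log k)⌉ := by
  classical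
  have hp₁ : (0 : ℝ) < P₁.card := by exact_mod_cast hR.1.card_pos
  have hp₂ : (0 : ℝ) < P₂.card := by exact_mod_cast hR.2.1.card_pos
  have hk0 : (0 : ℝ) < k := by positivity
  have hf : (0 : ℝ) < k.factorial := by positivity
  have hf' : (0 : ℝ) < (k - 1).factorial := by positivity
  have hfac : (k.factorial : ℝ) = k * (k - 1).factorial := by
    exact_mod_cast (Nat.mul_factorial_pred (by omega)).symm
  have hlog : 0 ≤ Real.log k := Real.log_natCast_nonneg k
  set B : ℝ := ((k.factorial * (k - 1).factorial : ℝ) / ((P₁.card : ℝ) * (P₂.card : ℝ)))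
          * (2 * k * Real.log k) with hB
  have hB0 : 0 ≤ B := by positivity
  set q : ℝ := (P₁.card : ℝ) * P₂.card / (k.factorial * (k - 1).factorial) with hq
  have hq0 : 0 < q := by positivity
  have hqB : q * B = 2 * k * Real.log k := by
    rw [hq, hB]
    field_simp
  set U : Finset (Equiv.Perm (Fin k) × Equiv.Perm (Fin k)) :=
    Finset.univ.filter fun x => (x.2 * x.1).cycleType = {k} with hU
  have hlt : Real.exp (-(q * ⌈B⌉₊)) * U.card < 1 := by
    have hUc : (U.card : ℝ) ≤ (k.factorial : ℝ) ^ 2 := by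
      have := Finset.card_le_univ U
      rw [Fintype.card_prod, Fintype.card_perm, Fintype.card_fin, ← sq] at this
      exact_mod_cast this
    have hkk : (k.factorial : ℝ) < (k : ℝ) ^ k := by exact_mod_cast factorial_lt_pow_self hk
    have hUlt : (U.card : ℝ) < ((k : ℝ) ^ k) ^ 2 := hUc.trans_lt (by gcongr)
    have hexp : Real.exp (2 * k * Real.log k) = ((k : ℝ) ^ k) ^ 2 := by
      rw [← pow_mul, mul_comm k 2, ← Real.exp_log (pow_pos hk0 (2 * k)), Real.log_pow]
      push_cast
      rfl
    have hqt : 2 * k * Real.log k ≤ q * ⌈B⌉₊ := by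
      rw [← hqB]
      gcongr
      exact Nat.le_ceil B
    rw [Real.exp_neg, inv_mul_lt_iff₀ (Real.exp_pos _), mul_one]
    exact hUlt.trans_le (hexp ▸ Real.exp_le_exp.2 hqt)
  obtain ⟨T, hT, hcov⟩ := exists_cover U
    (fun (g x : Equiv.Perm (Fin k) × Equiv.Perm (Fin k)) =>
      g.1 * x.1 * g.2⁻¹ ∈ P₁ ∧ g.2 * x.2 * g.1⁻¹ ∈ P₂) q
    (by
      intro x hx
      have h1 := le_card_carry_rect hR (Finset.mem_filter.1 hx).2
      have h2 : q * Fintype.card (Equiv.Perm (Fin k) × Equiv.Perm (Fin k))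
          = ((P₁.card * P₂.card * k : ℕ) : ℝ) := by
        rw [Fintype.card_prod, Fintype.card_perm, Fintype.card_fin]
        push_cast
        rw [hq, hfac]
        field_simp
      rw [h2]
      refine Nat.cast_le.2 (h1.trans (le_of_eq ?_))
      congr)
    ⌈B⌉₊ hlt
  refine ⟨T.image (rectTranslate P₁ P₂), ⟨?_, ?_⟩, ?_⟩
  · intro r hr
    obtain ⟨g, -, rfl⟩ := Finset.mem_image.1 hr
    exact isRect_rectTranslate hR g
  · intro ρ₁ ρ₂ hρ
    obtain ⟨g, hg, hM⟩ := hcov (ρ₁, ρ₂) (by simpa [hU] using hρ)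
    exact ⟨_, Finset.mem_image_of_mem _ hg, by simpa [rectTranslate] using hM.1,
      by simpa [rectTranslate] using hM.2⟩
  · rw [← Int.natCast_ceil_eq_ceil hB0]
    exact_mod_cast Finset.card_image_le.trans hT
end

section
/- Let k ≥ 1, let C, D be disjoint subsets of [2k] with C ∪ D = [2k] and |C| = |D| = k, and let c : [k] → C and d : [k] → D be bijections. Let ρ₁, ρ₂ be permutations of [2k], each with all cycles of length exactly 2, each mapping C onto D, and suppose ρ₂ ∘ ρ₁ has exactly two cycles, each of length k. Then the permutation (c⁻¹ ∘ ρ₂ ∘ d) ∘ (d⁻¹ ∘ ρ₁ ∘ c) of [k] is a single k-cycle. -/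
/-!
The composition `π = ρ₂ ∘ ρ₁` preserves both `C` and `D`. Carried back to `[k]` along `c`, its
restriction to `C` is `τ₂ ∘ τ₁`. Since `ρ₁` and `ρ₂` are involutions, its restriction to `D`,
carried back along `d`, is `τ₂⁻¹ ∘ τ₁⁻¹ = (τ₁ ∘ τ₂)⁻¹`. Inversion and conjugation preserve the
cycle type, so both restrictions have the cycle type `T` of `τ₂ ∘ τ₁`. Hence the cycle type
`{k, k}` of `π` equals `T + T`, which forces `T = {k}`.
-/

/-- The cycle type of a permutation that preserves two complementary sets, the ranges of `c` and
`d`, is the sum of the cycle types of its restrictions, described here by `σ` and `σ'`. -/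
theorem cycleType_eq_add_of_semiconj {α β γ : Type*} [Fintype α] [DecidableEq α]
    [Fintype β] [DecidableEq β] [Fintype γ] [DecidableEq γ]
    {c : α → γ} {d : β → γ} (hc : Function.Injective c) (hd : Function.Injective d)
    (hcd : ∀ i j, c i ≠ d j) (hU : ∀ x, (∃ i, c i = x) ∨ ∃ j, d j = x)
    {π : Equiv.Perm γ} {σ : Equiv.Perm α} {σ' : Equiv.Perm β}
    (hσ : ∀ i, c (σ i) = π (c i)) (hσ' : ∀ j, d (σ' j) = π (d j)) :
    π.cycleType = σ.cycleType + σ'.cycleType := by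
  classical
  let f : α ≃ {x // x ∈ Set.range c} := Equiv.ofInjective c hc
  let g : β ≃ {x // x ∈ Set.range d} := Equiv.ofInjective d hd
  have hfc (i : α) : σ.extendDomain f (c i) = c (σ i) :=
    Equiv.Perm.extendDomain_apply_image σ f i
  have hgd (j : β) : σ'.extendDomain g (d j) = d (σ' j) :=
    Equiv.Perm.extendDomain_apply_image σ' g j
  have hfd (j : β) : σ.extendDomain f (d j) = d j :=
    Equiv.Perm.extendDomain_apply_not_subtype σ f (by rintro ⟨i, hi⟩; exact hcd i j hi)
  have hgc (i : α) : σ'.extendDomain g (c i) = c i :=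
    Equiv.Perm.extendDomain_apply_not_subtype σ' g (by rintro ⟨j, hj⟩; exact hcd i j hj.symm)
  have hdisj : (σ.extendDomain f).Disjoint (σ'.extendDomain g) := by
    intro x
    rcases hU x with ⟨i, rfl⟩ | ⟨j, rfl⟩
    · exact Or.inr (hgc i)
    · exact Or.inl (hfd j)
  have hπ : π = σ.extendDomain f * σ'.extendDomain g := by
    ext x
    rcases hU x with ⟨i, rfl⟩ | ⟨j, rfl⟩
    · rw [Equiv.Perm.mul_apply, hgc, hfc, hσ]
    · rw [Equiv.Perm.mul_apply, hgd, hfd, hσ']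
  rw [hπ, hdisj.cycleType_mul, Equiv.Perm.cycleType_extendDomain,
    Equiv.Perm.cycleType_extendDomain]

theorem apply_apply_of_cycleType_eq_replicate_two {α : Type*} [Fintype α] [DecidableEq α]
    {ρ : Equiv.Perm α} {n : ℕ} (h : ρ.cycleType = Multiset.replicate n 2) (x : α) :
    ρ (ρ x) = x := by
  have h2 : ρ ^ 2 = 1 := (Equiv.Perm.pow_prime_eq_one_iff (hp := ⟨Nat.prime_two⟩)).2 fun m hm =>
    Multiset.eq_of_mem_replicate (h ▸ hm)
  rw [← Equiv.Perm.mul_apply, ← sq, h2, Equiv.Perm.one_apply]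


/-- Let `k ≥ 1`, let `C, D` partition `[2k]` with `|C| = |D| = k`, and let
`c : [k] → C`, `d : [k] → D` be bijections. Let `ρ₁, ρ₂` be fixed-point-free involutions
of `[2k]`, each mapping `C` onto `D`, such that `ρ₂ ∘ ρ₁` has exactly two cycles, each
of length `k`. Then `(c⁻¹ ∘ ρ₂ ∘ d) ∘ (d⁻¹ ∘ ρ₁ ∘ c)` is a single `k`-cycle.
Here `τ₁ = d⁻¹ ∘ ρ₁ ∘ c` and `τ₂ = c⁻¹ ∘ ρ₂ ∘ d` are specified by the defining
equations `d (τ₁ i) = ρ₁ (c i)` and `c (τ₂ i) = ρ₂ (d i)`. -/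
theorem stmt_8 (k : ℕ) (hk : 1 ≤ k)
    (C D : Finset (Fin (2 * k))) (hCD : Disjoint C D) (hU : C ∪ D = Finset.univ)
    (hC : C.card = k) (hD : D.card = k)
    (c d : Fin k → Fin (2 * k))
    (hc : Function.Injective c) (hcC : Finset.image c Finset.univ = C)
    (hd : Function.Injective d) (hdD : Finset.image d Finset.univ = D)
    (ρ₁ ρ₂ : Equiv.Perm (Fin (2 * k)))
    (h₁ : ρ₁.cycleType = Multiset.replicate k 2)
    (h₂ : ρ₂.cycleType = Multiset.replicate k 2)
    (h₁CD : ∀ x ∈ C, ρ₁ x ∈ D) (h₂CD : ∀ x ∈ C, ρ₂ x ∈ D)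
    (h₁₂ : (ρ₂ * ρ₁).cycleType = ({k, k} : Multiset ℕ))
    (τ₁ τ₂ : Equiv.Perm (Fin k))
    (hτ₁ : ∀ i, d (τ₁ i) = ρ₁ (c i))
    (hτ₂ : ∀ i, c (τ₂ i) = ρ₂ (d i)) :
    (τ₂ * τ₁).cycleType = ({k} : Multiset ℕ) := by
  have hinv₁ := apply_apply_of_cycleType_eq_replicate_two h₁
  have hinv₂ := apply_apply_of_cycleType_eq_replicate_two h₂
  have hcd (i j : Fin k) : c i ≠ d j := by
    refine Finset.disjoint_iff_ne.1 hCD _ ?_ _ ?_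
    · exact hcC ▸ Finset.mem_image_of_mem c (Finset.mem_univ i)
    · exact hdD ▸ Finset.mem_image_of_mem d (Finset.mem_univ j)
  have hcover (x : Fin (2 * k)) : (∃ i, c i = x) ∨ ∃ j, d j = x := by
    have hx : x ∈ C ∪ D := hU ▸ Finset.mem_univ x
    simpa [← hcC, ← hdD] using hx
  have hσ (i : Fin k) : c ((τ₂ * τ₁) i) = (ρ₂ * ρ₁) (c i) := by
    simp only [Equiv.Perm.mul_apply, hτ₁, hτ₂]
  have hσ' (j : Fin k) : d ((τ₁ * τ₂)⁻¹ j) = (ρ₂ * ρ₁) (d j) := by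
    obtain ⟨i, rfl⟩ := (τ₁ * τ₂).surjective j
    rw [← Equiv.Perm.mul_apply (τ₁ * τ₂)⁻¹, inv_mul_cancel, Equiv.Perm.one_apply]
    simp only [Equiv.Perm.mul_apply, hτ₁, hτ₂, hinv₁, hinv₂]
  have hconj : (τ₁ * τ₂).cycleType = (τ₂ * τ₁).cycleType := by
    rw [← Equiv.Perm.cycleType_conj (σ := τ₂ * τ₁) (τ := τ₁)]
    group
  have hsum := cycleType_eq_add_of_semiconj hc hd hcd hcover hσ hσ'
  rw [h₁₂, Equiv.Perm.cycleType_inv, hconj] at hsum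
  -- Doubling is injective on multisets, because it doubles every multiplicity.
  ext m
  have hm := congrArg (Multiset.count m) hsum
  rw [Multiset.count_add, show ({k, k} : Multiset ℕ) = {k} + {k} from rfl,
    Multiset.count_add] at hm
  omega
end

section
/- Let k ≥ 2 and let c > 0 be a real number such that every rectangle cover of the matching compatibility matrix M_k has size at least c. Then every rectangle (P₁, P₂) of the clique matching compatibility matrix M*_k satisfies |P₁|·|P₂| ≤ (2k−1)!·2k·ln k / c. -/
/-- A rectangle of the clique matching compatibility matrix `M*_k`: a pair of nonempty
sets `P₁, P₂ ⊆ S²_{2k}` (fixed-point-free involutions of `[2k]`) such that `ρ₂ ∘ ρ₁`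
has exactly two cycles, each of length `k`, for all `ρ₁ ∈ P₁, ρ₂ ∈ P₂`. -/
def IsCliqueRect (k : ℕ) (P₁ P₂ : Finset (Equiv.Perm (Fin (2 * k)))) : Prop :=
  P₁.Nonempty ∧ P₂.Nonempty ∧
    (∀ ρ ∈ P₁, ρ.cycleType = Multiset.replicate k 2) ∧
    (∀ ρ ∈ P₂, ρ.cycleType = Multiset.replicate k 2) ∧
    ∀ ρ₁ ∈ P₁, ∀ ρ₂ ∈ P₂, (ρ₂ * ρ₁).cycleType = ({k, k} : Multiset ℕ)

/-! ### Alternating Hamiltonian cycles -/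

/-- Two permutations of a `2 * k`-element set that are fixed-point-free involutions, with
`b * a` of exact period `k` at `x`: two perfect matchings whose union is a Hamiltonian cycle
(of length `2 * k`), with a marked point `x`. -/
structure AltCycle {X : Type*} [Fintype X] (k : ℕ) (a b : Equiv.Perm X) (x : X) : Prop where
  a_invol : ∀ y, a (a y) = y
  b_invol : ∀ y, b (b y) = y
  a_fpf : ∀ y, a y ≠ y
  b_fpf : ∀ y, b y ≠ y
  period : ∀ i : ℕ, ((b * a) ^ i) x = x ↔ k ∣ i
  card : Fintype.card X = 2 * k

/-- The vertices of an alternating cycle listed along the cycle, starting at `x`: the even ones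
are `(b * a) ^ i x`, and each is followed by its `a`-partner. -/
def cycleMap {X : Type*} (k : ℕ) (a b : Equiv.Perm X) (x : X) (p : ZMod k × Bool) : X :=
  if p.2 then a (((b * a) ^ p.1.val) x) else ((b * a) ^ p.1.val) x

namespace AltCycle

variable {X : Type*} [Fintype X] {k : ℕ} {a b : Equiv.Perm X} {x : X}

lemma pow_eq_iff_of_le (h : AltCycle k a b x) {i j : ℕ} (hij : i ≤ j) :
    ((b * a) ^ i) x = ((b * a) ^ j) x ↔ k ∣ j - i := by
  obtain ⟨d, rfl⟩ := Nat.exists_eq_add_of_le hij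
  rw [pow_add, Equiv.Perm.mul_apply, (Equiv.injective _).eq_iff, eq_comm, h.period]
  simp

lemma pow_mod (h : AltCycle k a b x) (i : ℕ) :
    ((b * a) ^ (i % k)) x = ((b * a) ^ i) x := by
  rw [h.pow_eq_iff_of_le (Nat.mod_le i k)]
  exact Nat.dvd_sub_mod i

/-- `a` conjugates `b * a` to its inverse. -/
lemma pow_a_pow (h : AltCycle k a b x) (n : ℕ) (y : X) :
    ((b * a) ^ n) (a (((b * a) ^ n) y)) = a y := by
  induction n generalizing y with
  | zero => simp
  | succ n ih =>
    rw [pow_succ, Equiv.Perm.mul_apply]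
    have : (b * a) (a (((b * a) ^ n * (b * a)) y)) = a (((b * a) ^ n) y) := by
      rw [← pow_succ, pow_succ', Equiv.Perm.mul_apply, Equiv.Perm.mul_apply, Equiv.Perm.mul_apply,
        h.a_invol, h.b_invol]
    rw [this, ih]

/-- A vertex and its `a`-partner lie on different orbits of `b * a`: otherwise `a` or `b`, acting
as a reflection of a single orbit, would have a fixed point. -/
lemma a_ne_pow (h : AltCycle k a b x) (n : ℕ) (y : X) : a y ≠ ((b * a) ^ n) y := by
  intro he
  obtain ⟨m, rfl | rfl⟩ := Nat.even_or_odd' n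
  · apply h.a_fpf (((b * a) ^ m) y)
    apply ((b * a) ^ m).injective
    rw [h.pow_a_pow, he, two_mul, pow_add, Equiv.Perm.mul_apply]
  · apply h.b_fpf (((b * a) ^ (m + 1)) y)
    rw [pow_succ', Equiv.Perm.mul_apply, Equiv.Perm.mul_apply, h.b_invol]
    apply ((b * a) ^ m).injective
    rw [h.pow_a_pow, he, ← Equiv.Perm.mul_apply b a, ← Equiv.Perm.mul_apply (b * a),
      ← pow_succ', ← Equiv.Perm.mul_apply, ← pow_add]
    congr 2
    ring

lemma a_cycleMap (h : AltCycle k a b x) (i : ZMod k) (s : Bool) :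
    a (cycleMap k a b x (i, s)) = cycleMap k a b x (i, !s) := by
  cases s <;> simp [cycleMap, h.a_invol]

variable [NeZero k]

lemma cycleMap_injective (h : AltCycle k a b x) : Function.Injective (cycleMap k a b x) := by
  have key : ∀ i j : ZMod k, ((b * a) ^ i.val) x = ((b * a) ^ j.val) x → i = j := by
    intro i j hij
    wlog hle : i.val ≤ j.val generalizing i j
    · exact (this j i hij.symm (by omega)).symm
    rw [h.pow_eq_iff_of_le hle] at hij
    apply ZMod.val_injective k
    have := Nat.eq_zero_of_dvd_of_lt hij (by have := ZMod.val_lt j; omega)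
    omega
  -- Any two orbit points are joined by a nonnegative power of `b * a`.
  have mixed : ∀ i j : ZMod k, a (((b * a) ^ i.val) x) ≠ ((b * a) ^ j.val) x := by
    intro i j he
    apply h.a_ne_pow (j.val + (k - i.val)) (((b * a) ^ i.val) x)
    rw [he, ← Equiv.Perm.mul_apply, ← pow_add, h.pow_eq_iff_of_le (by omega)]
    have := ZMod.val_lt i
    exact ⟨1, by omega⟩
  rintro ⟨i, s⟩ ⟨j, t⟩ hij
  cases s <;> cases t <;> simp only [cycleMap, if_true, if_false, Bool.false_eq_true] at hij
  · rw [key i j hij]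
  · exact absurd hij.symm (mixed j i)
  · exact absurd hij (mixed i j)
  · rw [key i j (a.injective hij)]

lemma cycleMap_bijective (h : AltCycle k a b x) : Function.Bijective (cycleMap k a b x) := by
  rw [Fintype.bijective_iff_injective_and_card]
  refine ⟨h.cycleMap_injective, ?_⟩
  rw [h.card]
  simp [ZMod.card, mul_comm]

lemma b_cycleMap_true (h : AltCycle k a b x) (i : ZMod k) :
    b (cycleMap k a b x (i, true)) = cycleMap k a b x (i + 1, false) := by
  simp only [cycleMap, if_true, if_false, Bool.false_eq_true]
  rw [ZMod.val_add, h.pow_mod, pow_add, ZMod.val_one_eq_one_mod, Equiv.Perm.mul_apply, h.pow_mod]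
  rw [← Equiv.Perm.mul_apply, ← Equiv.Perm.mul_apply, ← Equiv.Perm.mul_apply, ← pow_add, add_comm,
    pow_add, pow_one, mul_assoc]

lemma b_cycleMap_false (h : AltCycle k a b x) (i : ZMod k) :
    b (cycleMap k a b x (i, false)) = cycleMap k a b x (i - 1, true) := by
  have := h.b_cycleMap_true (i - 1)
  rw [sub_add_cancel] at this
  rw [← this, h.b_invol]

lemma b_cycleMap (h : AltCycle k a b x) (i : ZMod k) (s : Bool) :
    b (cycleMap k a b x (i, s)) = cycleMap k a b x (if s then i + 1 else i - 1, !s) := by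
  cases s
  · simpa using h.b_cycleMap_false i
  · simpa using h.b_cycleMap_true i

/-- Two alternating cycles of the same length with marked points are isomorphic. -/
lemma exists_equiv (h : AltCycle k a b x) {Y : Type*} [Fintype Y] {a' b' : Equiv.Perm Y} {y : Y}
    (h' : AltCycle k a' b' y) :
    ∃ e : X ≃ Y, e.permCongr a = a' ∧ e.permCongr b = b' ∧ e x = y := by
  let f := Equiv.ofBijective _ h.cycleMap_bijective
  let g := Equiv.ofBijective _ h'.cycleMap_bijective
  have hf : ∀ p, (f.symm.trans g) (cycleMap k a b x p) = cycleMap k a' b' y p := by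
    intro p
    have : cycleMap k a b x p = f p := rfl
    rw [this, Equiv.trans_apply, Equiv.symm_apply_apply]
    rfl
  refine ⟨f.symm.trans g, ?_, ?_, ?_⟩
  · ext z
    obtain ⟨⟨i, s⟩, rfl⟩ := h'.cycleMap_bijective.2 z
    rw [Equiv.permCongr_apply, ← hf, Equiv.symm_apply_apply, h.a_cycleMap, hf, hf, h'.a_cycleMap]
  · ext z
    obtain ⟨⟨i, s⟩, rfl⟩ := h'.cycleMap_bijective.2 z
    rw [Equiv.permCongr_apply, ← hf, Equiv.symm_apply_apply, h.b_cycleMap, hf, hf, h'.b_cycleMap]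
  · have := hf (0, false)
    simpa [cycleMap] using this

end AltCycle

/-! ### Cycle types and periods of points -/

lemma pow_cycleOf_apply_eq_iff {X : Type*} [Fintype X] [DecidableEq X] (T : Equiv.Perm X) {x : X}
    (hx : T x ≠ x) (i : ℕ) : (T ^ i) x = x ↔ (T.cycleOf x).support.card ∣ i := by
  have hc := Equiv.Perm.isCycle_cycleOf T hx
  rw [← hc.orderOf, orderOf_dvd_iff_pow_eq_one, hc.pow_eq_one_iff]
  constructor
  · intro h
    exact ⟨x, by simpa using hx, by simpa using h⟩
  · rintro ⟨y, hy, hy'⟩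
    have h1 : (T.cycleOf x) ^ i = 1 := hc.pow_eq_one_iff.2 ⟨y, hy, hy'⟩
    rw [← Equiv.Perm.cycleOf_pow_apply_self, h1, Equiv.Perm.one_apply]

lemma card_support_cycleOf_mem_cycleType {X : Type*} [Fintype X] [DecidableEq X]
    (T : Equiv.Perm X) {x : X} (hx : T x ≠ x) : (T.cycleOf x).support.card ∈ T.cycleType := by
  rw [Equiv.Perm.cycleType_def, Multiset.mem_map]
  exact ⟨T.cycleOf x, Finset.mem_def.1 (Equiv.Perm.cycleOf_mem_cycleFactorsFinset_iff.2
    (Equiv.Perm.mem_support.2 hx)), rfl⟩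

/-- If all cycles of `T`, fixed points included, have length `k`, every point has exact
period `k`. -/
lemma period_of_cycleType {X : Type*} [Fintype X] [DecidableEq X] {T : Equiv.Perm X} {k : ℕ}
    (h : ∀ n ∈ T.cycleType, n = k) (hs : T.cycleType.sum = Fintype.card X) (x : X) (i : ℕ) :
    (T ^ i) x = x ↔ k ∣ i := by
  rw [Equiv.Perm.sum_cycleType, Finset.card_eq_iff_eq_univ] at hs
  have hx : T x ≠ x := by
    rw [← Equiv.Perm.mem_support, hs]
    exact Finset.mem_univ x
  rw [pow_cycleOf_apply_eq_iff T hx, h _ (card_support_cycleOf_mem_cycleType T hx)]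

lemma cycleType_of_period {k : ℕ} (hk : 2 ≤ k) {T : Equiv.Perm (Fin k)} (x : Fin k)
    (h : ∀ i, (T ^ i) x = x ↔ k ∣ i) : T.cycleType = {k} := by
  have hx : T x ≠ x := by
    intro he
    have := Nat.le_of_dvd one_pos ((h 1).1 (by simpa using he))
    omega
  have hc : (T.cycleOf x).support.card = k := by
    apply Nat.dvd_antisymm
    · rw [← pow_cycleOf_apply_eq_iff T hx, h]
    · rw [← h, pow_cycleOf_apply_eq_iff T hx]
  apply Equiv.Perm.cycleType_of_card_le_mem_cycleType_add_two
  · simp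
  · have := card_support_cycleOf_mem_cycleType T hx
    rwa [hc] at this

lemma involution_of_cycleType {X : Type*} [Fintype X] [DecidableEq X] {T : Equiv.Perm X} {k : ℕ}
    (hX : Fintype.card X = 2 * k) (h : T.cycleType = Multiset.replicate k 2) (x : X) :
    T (T x) = x ∧ T x ≠ x := by
  have hp := period_of_cycleType (T := T) (k := 2)
    (by rw [h]; exact fun n hn => Multiset.eq_of_mem_replicate hn)
    (by rw [h, hX]; simp [mul_comm]) x
  refine ⟨?_, ?_⟩
  · have := (hp 2).2 dvd_rfl
    simpa [pow_two] using this
  · intro he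
    have := (hp 1).1 (by simpa using he)
    omega

lemma altCycle_of_cycleType {k : ℕ} {a b : Equiv.Perm (Fin (2 * k))}
    (ha : a.cycleType = Multiset.replicate k 2) (hb : b.cycleType = Multiset.replicate k 2)
    (hab : (b * a).cycleType = ({k, k} : Multiset ℕ)) (x : Fin (2 * k)) : AltCycle k a b x := by
  have hX : Fintype.card (Fin (2 * k)) = 2 * k := Fintype.card_fin _
  exact ⟨fun y => (involution_of_cycleType hX ha y).1, fun y => (involution_of_cycleType hX hb y).1,
    fun y => (involution_of_cycleType hX ha y).2, fun y => (involution_of_cycleType hX hb y).2,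
    period_of_cycleType (by rw [hab]; simp) (by rw [hab, hX]; simp [two_mul]) x, hX⟩

/-- The bipartite perfect matching on two copies of `Fin k` joining `inl i` to `inr (ρ i)`, as a
fixed-point-free involution. -/
def cross {k : ℕ} (ρ : Equiv.Perm (Fin k)) : Equiv.Perm (Fin k ⊕ Fin k) :=
  (Equiv.sumComm _ _).trans (Equiv.sumCongr ρ⁻¹ ρ)

@[simp] lemma cross_inl {k : ℕ} (ρ : Equiv.Perm (Fin k)) (i : Fin k) :
    cross ρ (Sum.inl i) = Sum.inr (ρ i) := rfl

@[simp] lemma cross_inr {k : ℕ} (ρ : Equiv.Perm (Fin k)) (i : Fin k) :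
    cross ρ (Sum.inr i) = Sum.inl (ρ⁻¹ i) := rfl

lemma cross_pow {k : ℕ} (ρ₁ ρ₂ : Equiv.Perm (Fin k)) (n : ℕ) (z : Fin k) :
    ((cross ρ₂⁻¹ * cross ρ₁) ^ n) (Sum.inl z) = Sum.inl (((ρ₂ * ρ₁) ^ n) z) := by
  induction n generalizing z with
  | zero => simp
  | succ n ih => simp [pow_succ, ih]

lemma altCycle_cross {k : ℕ} {ρ₁ ρ₂ : Equiv.Perm (Fin k)}
    (h : (ρ₂ * ρ₁).cycleType = ({k} : Multiset ℕ)) (z : Fin k) :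
    AltCycle k (cross ρ₁) (cross ρ₂⁻¹) (Sum.inl z) := by
  refine ⟨?_, ?_, ?_, ?_, ?_, ?_⟩
  · rintro (y | y) <;> simp
  · rintro (y | y) <;> simp
  · rintro (y | y) <;> simp
  · rintro (y | y) <;> simp
  · intro i
    rw [cross_pow, Sum.inl_injective.eq_iff]
    exact period_of_cycleType (by rw [h]; simp) (by rw [h]; simp) z i
  · simp [two_mul]

/-! ### Rectangles of `M_k` from a clique rectangle -/

/-- The part of a clique rectangle seen through a labelling `e` of the vertices by two copies of
`Fin k`: the pairs of bijections between the two copies whose matchings belong to it. -/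
noncomputable def pullRect {k : ℕ} (P₁ P₂ : Finset (Equiv.Perm (Fin (2 * k))))
    (e : Fin k ⊕ Fin k ≃ Fin (2 * k)) :
    Finset (Equiv.Perm (Fin k)) × Finset (Equiv.Perm (Fin k)) :=
  (Finset.univ.filter fun ρ => e.permCongr (cross ρ) ∈ P₁,
    Finset.univ.filter fun ρ => e.permCongr (cross ρ⁻¹) ∈ P₂)

lemma permCongr_pow_apply {X Y : Type*} (e : X ≃ Y) (a b : Equiv.Perm X) (n : ℕ) (x : X) :
    ((e.permCongr b * e.permCongr a) ^ n) (e x) = e (((b * a) ^ n) x) := by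
  induction n generalizing x with
  | zero => simp
  | succ n ih => simp [pow_succ, Equiv.permCongr_apply, ih]

lemma isRect_pullRect {k : ℕ} (hk : 2 ≤ k) {P₁ P₂ : Finset (Equiv.Perm (Fin (2 * k)))}
    (hR : IsCliqueRect k P₁ P₂) (e : Fin k ⊕ Fin k ≃ Fin (2 * k))
    (h₁ : (pullRect P₁ P₂ e).1.Nonempty) (h₂ : (pullRect P₁ P₂ e).2.Nonempty) :
    IsRect k (pullRect P₁ P₂ e).1 (pullRect P₁ P₂ e).2 := by
  refine ⟨h₁, h₂, ?_⟩
  intro ρ₁ hρ₁ ρ₂ hρ₂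
  simp only [pullRect, Finset.mem_filter, Finset.mem_univ, true_and] at hρ₁ hρ₂
  have hc := hR.2.2.2.2 _ hρ₁ _ hρ₂
  let z : Fin k := ⟨0, by omega⟩
  have hp := (altCycle_of_cycleType (hR.2.2.1 _ hρ₁) (hR.2.2.2.1 _ hρ₂) hc (e (Sum.inl z))).period
  apply cycleType_of_period hk z
  intro i
  rw [← hp, permCongr_pow_apply, cross_pow, e.injective.eq_iff, Sum.inl_injective.eq_iff]

/-- Each entry of `M_k` is covered by at least `2 * k * |P₁| * |P₂|` labellings: every pair in
`P₁ × P₂` is isomorphic to the entry with an arbitrary choice of image of the marked vertex. -/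
lemma card_le_pullRect {k : ℕ} (hk : 2 ≤ k) {P₁ P₂ : Finset (Equiv.Perm (Fin (2 * k)))}
    (hR : IsCliqueRect k P₁ P₂) {ρ₁ ρ₂ : Equiv.Perm (Fin k)}
    (h : (ρ₂ * ρ₁).cycleType = ({k} : Multiset ℕ)) :
    2 * k * (P₁.card * P₂.card) ≤ (Finset.univ.filter fun e : Fin k ⊕ Fin k ≃ Fin (2 * k) =>
      ρ₁ ∈ (pullRect P₁ P₂ e).1 ∧ ρ₂ ∈ (pullRect P₁ P₂ e).2).card := by
  have : NeZero k := ⟨by omega⟩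
  let z : Fin k := ⟨0, by omega⟩
  have hex : ∀ t : {a // a ∈ P₁} × {b // b ∈ P₂} × Fin (2 * k),
      ∃ e : Fin k ⊕ Fin k ≃ Fin (2 * k), e.permCongr (cross ρ₁) = t.1.1 ∧
        e.permCongr (cross ρ₂⁻¹) = t.2.1.1 ∧ e (Sum.inl z) = t.2.2 := by
    rintro ⟨⟨a, ha⟩, ⟨b, hb⟩, x⟩
    exact (altCycle_cross h z).exists_equiv (altCycle_of_cycleType (hR.2.2.1 _ ha)
      (hR.2.2.2.1 _ hb) (hR.2.2.2.2 _ ha _ hb) x)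
  choose F hF using hex
  have hcard : (Finset.univ : Finset ({a // a ∈ P₁} × {b // b ∈ P₂} × Fin (2 * k))).card
      = 2 * k * (P₁.card * P₂.card) := by
    simp only [Finset.card_univ, Fintype.card_prod, Fintype.card_coe, Fintype.card_fin]
    ring
  rw [← hcard]
  refine Finset.card_le_card_of_injOn F ?_ ?_
  · intro t _
    obtain ⟨h1, h2, -⟩ := hF t
    simp only [Finset.coe_filter, Set.mem_ofPred_eq, Finset.mem_univ, true_and, pullRect,
      Finset.mem_filter, h1, h2]
    exact ⟨t.1.2, t.2.1.2⟩
  · intro t _ t' _ he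
    obtain ⟨h1, h2, h3⟩ := hF t
    obtain ⟨h1', h2', h3'⟩ := hF t'
    rw [he] at h1 h2 h3
    exact Prod.ext (Subtype.ext (h1.symm.trans h1'))
      (Prod.ext (Subtype.ext (h2.symm.trans h2')) (h3.symm.trans h3'))

/-! ### Greedy covering and the estimate -/

/-- Greedy covering: if each element of `U` is covered by at least a proportion `p` of `Ω`, then
`t` elements of `Ω` suffice to leave at most `|U| * (1 - p) ^ t` elements uncovered. -/
lemma exists_greedy_cover {Ω α : Type*} [Fintype Ω] [Nonempty Ω] [DecidableEq Ω]
    (C : Ω → α → Prop) [∀ ω u, Decidable (C ω u)] (U : Finset α) (p : ℝ) (hp1 : p ≤ 1)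
    (hp : ∀ u ∈ U, p * Fintype.card Ω ≤ ((Finset.univ.filter fun ω => C ω u).card : ℝ)) (t : ℕ) :
    ∃ S : Finset Ω, S.card ≤ t ∧
      ((U.filter fun u => ∀ ω ∈ S, ¬ C ω u).card : ℝ) ≤ U.card * (1 - p) ^ t := by
  induction t with
  | zero => exact ⟨∅, by simp, by simp⟩
  | succ t ih =>
    obtain ⟨S, hS, hle⟩ := ih
    set V := U.filter fun u => ∀ ω ∈ S, ¬ C ω u with hV
    -- Averaging: some `ω` covers at least the proportion `p` of what is still uncovered.
    obtain ⟨ω, hω⟩ : ∃ ω, p * V.card ≤ ((V.filter fun u => C ω u).card : ℝ) := by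
      by_contra! hcon
      have hlt : ∑ ω : Ω, ((V.filter fun u => C ω u).card : ℝ) < ∑ _ω : Ω, p * V.card :=
        Finset.sum_lt_sum_of_nonempty Finset.univ_nonempty fun ω _ => hcon ω
      have hswap : ∑ ω : Ω, ((V.filter fun u => C ω u).card : ℝ)
          = ∑ u ∈ V, ((Finset.univ.filter fun ω => C ω u).card : ℝ) := by
        exact_mod_cast Finset.sum_card_bipartiteAbove_eq_sum_card_bipartiteBelow C
      have hge : ∑ _u ∈ V, p * (Fintype.card Ω : ℝ)
          ≤ ∑ u ∈ V, ((Finset.univ.filter fun ω => C ω u).card : ℝ) :=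
        Finset.sum_le_sum fun u hu => hp u (Finset.mem_filter.1 hu).1
      rw [hswap] at hlt
      simp only [Finset.sum_const, nsmul_eq_mul, Finset.card_univ] at hlt hge
      nlinarith
    refine ⟨insert ω S, (Finset.card_insert_le _ _).trans (by omega), ?_⟩
    have hsub : (U.filter fun u => ∀ ω' ∈ insert ω S, ¬ C ω' u) = V.filter fun u => ¬ C ω u := by
      ext u
      simp only [hV, Finset.mem_filter, Finset.mem_insert, forall_eq_or_imp]
      tauto
    have hadd : ((V.filter fun u => C ω u).card : ℝ) + (V.filter fun u => ¬ C ω u).card = V.card := by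
      exact_mod_cast Finset.card_filter_add_card_filter_not (s := V) (fun u => C ω u)
    rw [hsub]
    calc ((V.filter fun u => ¬ C ω u).card : ℝ) ≤ V.card * (1 - p) := by linarith
      _ ≤ (U.card * (1 - p) ^ t) * (1 - p) := mul_le_mul_of_nonneg_right hle (by linarith)
      _ = U.card * (1 - p) ^ (t + 1) := by ring

lemma factorial_succ_le_pow (m : ℕ) : (m + 1).factorial ≤ (m + 1) ^ m := by
  induction m with
  | zero => simp
  | succ m ih =>
    rw [Nat.factorial_succ, pow_succ']
    exact Nat.mul_le_mul_left _ (ih.trans (Nat.pow_le_pow_left (by omega) m))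

/-- The number of rectangles allowed is enough for the greedy cover to leave less than one of the
at most `k! ^ 2` entries uncovered. -/
lemma uncovered_lt_one {k : ℕ} (hk : 2 ≤ k) {p : ℝ} (hp0 : 0 < p) (hp1 : p ≤ 1) :
    ((k.factorial : ℝ) * k.factorial) * (1 - p) ^ ⌊2 * k * Real.log k / p⌋₊ < 1 := by
  set t := ⌊2 * k * Real.log k / p⌋₊
  have hk0 : (0 : ℝ) < k := by exact_mod_cast (by omega : 0 < k)
  have hlog2 : Real.log 2 ≤ Real.log k :=
    Real.log_le_log (by norm_num) (by exact_mod_cast hk)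
  have hl := Real.log_two_gt_d9
  have ht : 2 * k * Real.log k - 1 < p * t := by
    have h1 : 2 * k * Real.log k / p < t + 1 := Nat.lt_floor_add_one _
    rw [div_lt_iff₀ hp0] at h1
    linarith
  have hfac : (k.factorial : ℝ) ≤ Real.exp ((k - 1) * Real.log k) := by
    obtain ⟨m, rfl⟩ := Nat.exists_eq_add_of_le' (show 1 ≤ k by omega)
    have h1 : ((m + 1).factorial : ℝ) ≤ ((m + 1 : ℕ) : ℝ) ^ m := by
      exact_mod_cast factorial_succ_le_pow m
    refine h1.trans (le_of_eq ?_)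
    rw [show (((m + 1 : ℕ) : ℝ) - 1) = m by push_cast; ring, Real.exp_nat_mul, Real.exp_log hk0]
  have hpow : (1 - p) ^ t ≤ Real.exp (-(p * t)) := by
    have h1 : (1 - p) ^ t ≤ Real.exp (-p) ^ t :=
      pow_le_pow_left₀ (by linarith) (Real.one_sub_le_exp_neg p) t
    rwa [← Real.exp_nat_mul, show (t : ℝ) * -p = -(p * t) by ring] at h1
  calc ((k.factorial : ℝ) * k.factorial) * (1 - p) ^ t
      ≤ (Real.exp ((k - 1) * Real.log k) * Real.exp ((k - 1) * Real.log k)) *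
          Real.exp (-(p * t)) := by
        have : (0 : ℝ) ≤ (1 - p) ^ t := pow_nonneg (by linarith) t
        gcongr
    _ = Real.exp ((k - 1) * Real.log k + (k - 1) * Real.log k + -(p * t)) := by
        rw [Real.exp_add, Real.exp_add]
    _ < 1 := by
        rw [Real.exp_lt_one_iff]
        nlinarith

/-- Let `k ≥ 2` and `c > 0` be such that every rectangle cover of `M_k`
has size at least `c`. Then every rectangle `(P₁, P₂)` of the clique matching
compatibility matrix `M*_k` satisfies `|P₁|·|P₂| ≤ (2k-1)!·2k·ln k / c`. -/
theorem stmt_9 (k : ℕ) (hk : 2 ≤ k) (c : ℝ) (hc : 0 < c)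
    (hcov : ∀ R, IsRectCover k R → c ≤ (R.card : ℝ))
    (P₁ P₂ : Finset (Equiv.Perm (Fin (2 * k)))) (hR : IsCliqueRect k P₁ P₂) :
    ((P₁.card : ℝ) * (P₂.card : ℝ)) ≤
      (((2 * k - 1).factorial : ℝ) * (2 * k) * Real.log k) / c := by
  classical
  have hk0 : (0 : ℝ) < k := by exact_mod_cast (by omega : 0 < k)
  have hP : (0 : ℝ) < (P₁.card : ℝ) * P₂.card := by
    have h1 := hR.1.card_pos
    have h2 := hR.2.1.card_pos
    positivity
  have hfac : (0 : ℝ) < ((2 * k - 1).factorial : ℝ) := by exact_mod_cast Nat.factorial_pos _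
  set p : ℝ := (P₁.card : ℝ) * P₂.card / ((2 * k - 1).factorial : ℝ) with hpdef
  have hp0 : 0 < p := div_pos hP hfac
  let U : Finset (Equiv.Perm (Fin k) × Equiv.Perm (Fin k)) :=
    Finset.univ.filter fun u => (u.2 * u.1).cycleType = ({k} : Multiset ℕ)
  have e₀ : Fin k ⊕ Fin k ≃ Fin (2 * k) := Fintype.equivOfCardEq (by simp [two_mul])
  have : Nonempty (Fin k ⊕ Fin k ≃ Fin (2 * k)) := ⟨e₀⟩
  have hΩ : (Fintype.card (Fin k ⊕ Fin k ≃ Fin (2 * k)) : ℝ)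
      = 2 * k * ((2 * k - 1).factorial : ℝ) := by
    rw [Fintype.card_equiv e₀, Fintype.card_sum, Fintype.card_fin, ← two_mul,
      ← Nat.mul_factorial_pred (show 2 * k ≠ 0 by omega)]
    push_cast
    ring
  have hpΩ : p * Fintype.card (Fin k ⊕ Fin k ≃ Fin (2 * k))
      = ((2 * k * (P₁.card * P₂.card) : ℕ) : ℝ) := by
    rw [hΩ, hpdef]
    push_cast
    field_simp
  have hcount : ∀ u ∈ U, p * Fintype.card (Fin k ⊕ Fin k ≃ Fin (2 * k)) ≤
      ((Finset.univ.filter fun e : Fin k ⊕ Fin k ≃ Fin (2 * k) =>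
        u.1 ∈ (pullRect P₁ P₂ e).1 ∧ u.2 ∈ (pullRect P₁ P₂ e).2).card : ℝ) := by
    intro u hu
    rw [hpΩ]
    exact_mod_cast card_le_pullRect hk hR (Finset.mem_filter.1 hu).2
  -- If `M_k` had no entries the empty family would be a cover, contradicting `0 < c`.
  have hU : U.Nonempty := by
    by_contra hne
    rw [Finset.not_nonempty_iff_eq_empty] at hne
    have := hcov ∅ ⟨by simp, fun ρ₁ ρ₂ h => by
      have hm : (ρ₁, ρ₂) ∈ U := Finset.mem_filter.2 ⟨Finset.mem_univ _, h⟩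
      simp [hne] at hm⟩
    simp at this
    linarith
  have hp1 : p ≤ 1 := by
    obtain ⟨u, hu⟩ := hU
    have h1 := (hcount u hu).trans (Nat.cast_le.2 (Finset.card_le_univ _))
    have h2 : (0 : ℝ) < Fintype.card (Fin k ⊕ Fin k ≃ Fin (2 * k)) := by
      exact_mod_cast Fintype.card_pos
    exact le_of_mul_le_mul_right (by simpa using h1) h2
  obtain ⟨S, hS, hcard⟩ := exists_greedy_cover
    (fun (e : Fin k ⊕ Fin k ≃ Fin (2 * k)) (u : Equiv.Perm (Fin k) × Equiv.Perm (Fin k)) =>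
      u.1 ∈ (pullRect P₁ P₂ e).1 ∧ u.2 ∈ (pullRect P₁ P₂ e).2)
    U p hp1 hcount ⌊2 * k * Real.log k / p⌋₊
  have hUcard : (U.card : ℝ) ≤ (k.factorial : ℝ) * k.factorial := by
    have h1 := Finset.card_le_univ U
    rw [Fintype.card_prod, Fintype.card_perm, Fintype.card_fin] at h1
    exact_mod_cast h1
  have hnone := (hcard.trans (mul_le_mul_of_nonneg_right hUcard
    (pow_nonneg (by linarith) _))).trans_lt (uncovered_lt_one hk hp0 hp1)
  have hzero : (U.filter fun u => ∀ e ∈ S,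
      ¬ (u.1 ∈ (pullRect P₁ P₂ e).1 ∧ u.2 ∈ (pullRect P₁ P₂ e).2)) = ∅ := by
    rw [← Finset.card_eq_zero]
    exact Nat.lt_one_iff.1 (by exact_mod_cast hnone)
  -- Labellings for which one of the two sides is empty are discarded.
  have hfin := hcov ((S.image (pullRect P₁ P₂)).filter fun r => r.1.Nonempty ∧ r.2.Nonempty) (by
    constructor
    · intro r hr
      obtain ⟨hr1, hr2, hr3⟩ := Finset.mem_filter.1 hr
      obtain ⟨e, -, rfl⟩ := Finset.mem_image.1 hr1
      exact isRect_pullRect hk hR e hr2 hr3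
    · intro ρ₁ ρ₂ h
      by_contra! hcon
      have hm : (ρ₁, ρ₂) ∈ (U.filter fun u => ∀ e ∈ S,
          ¬ (u.1 ∈ (pullRect P₁ P₂ e).1 ∧ u.2 ∈ (pullRect P₁ P₂ e).2)) := by
        refine Finset.mem_filter.2 ⟨Finset.mem_filter.2 ⟨Finset.mem_univ _, h⟩, ?_⟩
        rintro e he ⟨h1, h2⟩
        exact hcon (pullRect P₁ P₂ e) (Finset.mem_filter.2
          ⟨Finset.mem_image_of_mem _ he, ⟨_, h1⟩, ⟨_, h2⟩⟩) h1 h2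
      rw [hzero] at hm
      simp at hm)
  have hRS : (((S.image (pullRect P₁ P₂)).filter fun r => r.1.Nonempty ∧ r.2.Nonempty).card : ℝ)
      ≤ (⌊2 * k * Real.log k / p⌋₊ : ℝ) := by
    exact_mod_cast ((Finset.card_filter_le _ _).trans Finset.card_image_le).trans hS
  have hlog : 0 ≤ Real.log k := Real.log_nonneg (by exact_mod_cast (by omega : 1 ≤ k))
  have hc' : c ≤ 2 * k * Real.log k / p :=
    (hfin.trans hRS).trans (Nat.floor_le (by positivity))
  rw [le_div_iff₀ hp0, hpdef, ← mul_div_assoc, div_le_iff₀ hfac] at hc'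
  rw [le_div_iff₀ hc]
  linarith
end

section
/- There exist a real constant c > 0 and an integer k₀ such that for every integer k ≥ k₀, every rectangle cover of the matching compatibility matrix M_k has size at least 2^{c·k·log log k} (logarithms to base 2). -/
namespace MatchingCompat

open Equiv Finset

/-! ### Stable sets of permutations -/

/-- The graph of `A`, as a bipartite graph on two copies of `Fin n`: all edges `(x, a x)` with
`a ∈ A`. -/
def supp {n : ℕ} (A : Finset (Perm (Fin n))) : Finset (Fin n × Fin n) :=
  univ.filter fun e => ∃ a ∈ A, a e.1 = e.2

/-- `A` is stable if it maximises `|F| / 2 ^ (|supp F| / n)` among its subsets `F`: passing to a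
subset loses at least as much in cardinality as it gains by shrinking the graph. The inequality is
raised to the power `n` and cleared of denominators. -/
def IsStable {n : ℕ} (A : Finset (Perm (Fin n))) : Prop :=
  ∀ F ⊆ A, F.card ^ n * 2 ^ (supp A).card ≤ A.card ^ n * 2 ^ (supp F).card

lemma supp_mono {n : ℕ} {A F : Finset (Perm (Fin n))} (h : F ⊆ A) : supp F ⊆ supp A := by
  intro e he
  simp only [supp, mem_filter, mem_univ, true_and] at he ⊢
  obtain ⟨a, ha, h'⟩ := he
  exact ⟨a, h ha, h'⟩

lemma card_supp_le {n : ℕ} (A : Finset (Perm (Fin n))) : (supp A).card ≤ n * n := by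
  simpa using card_le_univ (supp A)

/-- Every set contains a stable subset at the cost of a factor `2 ^ n`, because its graph has at
most `n ^ 2` edges. -/
lemma exists_stable {n : ℕ} (hn : n ≠ 0) (A : Finset (Perm (Fin n))) :
    ∃ A' ⊆ A, IsStable A' ∧ A.card ≤ 2 ^ n * A'.card := by
  obtain ⟨A', hA', hmax⟩ := exists_max_image A.powerset
    (fun F => F.card ^ n * 2 ^ (n * n - (supp F).card)) ⟨A, by simp⟩
  rw [mem_powerset] at hA'
  refine ⟨A', hA', ?_, ?_⟩
  · intro F hF
    have h := hmax F (mem_powerset.2 (hF.trans hA'))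
    have h1 := card_supp_le A'
    have h2 := card_supp_le F
    have h3 := Nat.mul_le_mul_right (2 ^ ((supp A').card + (supp F).card)) h
    have e1 : 2 ^ (n * n) = 2 ^ (n * n - (supp F).card) * 2 ^ (supp F).card := by
      rw [← pow_add]; congr 1; omega
    have e2 : 2 ^ (n * n) = 2 ^ (n * n - (supp A').card) * 2 ^ (supp A').card := by
      rw [← pow_add]; congr 1; omega
    refine Nat.le_of_mul_le_mul_left (c := 2 ^ (n * n)) ?_ (by positivity)
    calc _ = F.card ^ n * 2 ^ (n * n - (supp F).card) * 2 ^ ((supp A').card + (supp F).card) := by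
          rw [e1, pow_add]; ring
      _ ≤ _ := h3
      _ = _ := by rw [e2, pow_add]; ring
  · have h := hmax A (by simp)
    refine le_of_pow_le_pow_left₀ hn (by positivity) ?_
    calc A.card ^ n ≤ A.card ^ n * 2 ^ (n * n - (supp A).card) :=
          Nat.le_mul_of_pos_right _ (by positivity)
      _ ≤ A'.card ^ n * 2 ^ (n * n - (supp A').card) := h
      _ ≤ A'.card ^ n * 2 ^ (n * n) := by gcongr <;> omega
      _ = _ := by rw [mul_pow, ← pow_mul]; ring

/-- If `F` has density at least `1 / D` in the stable set `A`, then almost every edge of `supp A` is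
used by a fraction at least `1 / (2 n ^ 2)` of the members of `F`: discarding the members of `F`
through a lighter edge keeps half of `F`, and stability then bounds the number of edges lost. -/
lemma card_light {n : ℕ} {A F : Finset (Perm (Fin n))} (hA : IsStable A) (hF : F ⊆ A)
    (hne : A.Nonempty) {D m : ℕ} (hD : A.card ≤ F.card * D) (hm : 2 * D ≤ 2 ^ m) :
    ((supp A).filter fun e =>
      (F.filter fun a => a e.1 = e.2).card * (2 * n ^ 2) < F.card).card ≤ n * m := by
  set light : Finset (Fin n × Fin n) := univ.filter fun e =>
      (F.filter fun a => a e.1 = e.2).card * (2 * n ^ 2) < F.card with hl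
  set F' := F.filter fun a => ∀ x, (x, a x) ∉ light with hF'
  have hsub : F \ F' ⊆ light.biUnion fun e => F.filter fun a => a e.1 = e.2 := by
    intro a ha
    simp only [hF', mem_sdiff, mem_filter, not_and, not_forall, not_not] at ha
    obtain ⟨x, hx⟩ := ha.2 ha.1
    exact mem_biUnion.2 ⟨_, hx, by simp [ha.1]⟩
  have h1 : (F \ F').card * (2 * n ^ 2) ≤ F.card * n ^ 2 := by
    calc _ ≤ (∑ e ∈ light, (F.filter fun a => a e.1 = e.2).card) * (2 * n ^ 2) :=
          Nat.mul_le_mul_right _ ((card_le_card hsub).trans card_biUnion_le)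
      _ = ∑ e ∈ light, (F.filter fun a => a e.1 = e.2).card * (2 * n ^ 2) := sum_mul ..
      _ ≤ ∑ e ∈ light, F.card := sum_le_sum fun e he => (mem_filter.1 he).2.le
      _ = light.card * F.card := by simp
      _ ≤ (n ^ 2) * F.card := by
          gcongr
          simpa [sq] using card_le_univ light
      _ = _ := mul_comm _ _
  have hFsub : F' ⊆ F := filter_subset _ _
  rcases Nat.eq_zero_or_pos n with h0 | hn
  · subst h0
    simp [Finset.eq_empty_of_isEmpty]
  have h2 : F.card ≤ 2 * F'.card := by
    have h3 := card_sdiff_add_card_eq_card hFsub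
    have : 2 * (F \ F').card ≤ F.card :=
      Nat.le_of_mul_le_mul_right (c := n ^ 2) (by nlinarith) (by positivity)
    omega
  have h4 : A.card ≤ F'.card * 2 ^ m := by
    calc A.card ≤ F.card * D := hD
      _ ≤ 2 * F'.card * D := by gcongr
      _ = F'.card * (2 * D) := by ring
      _ ≤ _ := by gcongr
  have hs := hA F' (hFsub.trans hF)
  have hpos : 0 < F'.card := by
    have := hne.card_pos
    by_contra h
    have : F'.card = 0 := by omega
    rw [this] at h4; omega
  have h5 : 2 ^ (supp A).card ≤ 2 ^ ((supp F').card + n * m) := by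
    refine Nat.le_of_mul_le_mul_left (c := F'.card ^ n) ?_ (by positivity)
    calc _ ≤ _ := hs
      _ ≤ (F'.card * 2 ^ m) ^ n * 2 ^ (supp F').card := by gcongr
      _ = _ := by rw [mul_pow, pow_add, ← pow_mul, mul_comm m n]; ring
  have h6 : (supp A).card ≤ (supp F').card + n * m := (Nat.pow_le_pow_iff_right (by norm_num)).1 h5
  have h7 : ((supp A).filter fun e =>
      (F.filter fun a => a e.1 = e.2).card * (2 * n ^ 2) < F.card) ⊆ supp A \ supp F' := by
    intro e he
    rw [mem_filter] at he
    refine mem_sdiff.2 ⟨he.1, fun h => ?_⟩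
    simp only [supp, mem_filter, mem_univ, true_and] at h
    obtain ⟨a, ha, hae⟩ := h
    refine (mem_filter.1 ha).2 e.1 ?_
    rw [hae]
    exact mem_filter.2 ⟨mem_univ _, he.2⟩
  have h8 := card_le_card h7
  have h9 := card_sdiff_add_card_eq_card (supp_mono (hFsub.trans hF))
  omega

/-- Fubini in the two coordinates `s` and `t`: a bound on every two-dimensional slice of `X` bounds
`X`. -/
lemma card_mul_sq_le {n : ℕ} {ι : Type*} [Fintype ι] [DecidableEq ι] (X : Finset (ι → Fin n))
    (s t : ι) (hst : s ≠ t) (c : ℕ)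
    (h : ∀ f : ι → Fin n, (univ.filter fun e : Fin n × Fin n =>
      Function.update (Function.update f s e.1) t e.2 ∈ X).card ≤ c) :
    X.card * n ^ 2 ≤ c * n ^ Fintype.card ι := by
  calc X.card * n ^ 2 = (X ×ˢ (univ : Finset (Fin n × Fin n))).card := by simp [sq]
    _ ≤ ((univ : Finset (ι → Fin n)).sigma fun f => univ.filter fun e : Fin n × Fin n =>
      Function.update (Function.update f s e.1) t e.2 ∈ X).card := by
        refine card_le_card_of_injOn
          (fun y => ⟨Function.update (Function.update y.1 s y.2.1) t y.2.2, (y.1 s, y.1 t)⟩) ?_ ?_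
        · intro y hy
          simp only [coe_product, coe_univ, Set.mem_prod, mem_coe, Set.mem_univ, and_true] at hy
          simp only [coe_sigma, Set.mem_sigma_iff, mem_coe, mem_filter, mem_univ, true_and]
          convert hy using 1
          ext i
          by_cases h1 : i = t
          · subst h1; simp
          · by_cases h2 : i = s
            · subst h2; simp [h1]
            · simp [h1, h2]
        · rintro ⟨f, a, b⟩ _ ⟨g, a', b'⟩ _ heq
          simp only [Sigma.mk.injEq, heq_eq_eq, Prod.mk.injEq] at heq
          obtain ⟨h1, h2, h3⟩ := heq
          have ht := congrFun h1 t
          have hs := congrFun h1 s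
          simp [hst] at ht hs
          subst ht hs
          have : f = g := by
            ext i
            by_cases h4 : i = t
            · subst h4; rw [h3]
            · by_cases h5 : i = s
              · subst h5; rw [h2]
              · have := congrFun h1 i
                simp only [Function.update_of_ne h4, Function.update_of_ne h5] at this
                rw [this]
          simp [this]
    _ = ∑ f : ι → Fin n, _ := card_sigma ..
    _ ≤ ∑ f : ι → Fin n, c := sum_le_sum fun f _ => h f
    _ = c * n ^ Fintype.card ι := by simp [mul_comm]

/-- The members of `A` that send the value of the variable `p s` to the value of the variable `q s`
for every `s ∈ S`, where `f : ι → Fin n` assigns values to the variables. -/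
def fam {n : ℕ} {ι κ : Type*} (A : Finset (Perm (Fin n))) (p q : κ → ι) (S : Finset κ)
    (f : ι → Fin n) : Finset (Perm (Fin n)) :=
  A.filter fun a => ∀ s ∈ S, a (f (p s)) = f (q s)

lemma mem_fam {n : ℕ} {ι κ : Type*} {A : Finset (Perm (Fin n))} {p q : κ → ι} {S : Finset κ}
    {f : ι → Fin n} {a : Perm (Fin n)} :
    a ∈ fam A p q S f ↔ a ∈ A ∧ ∀ s ∈ S, a (f (p s)) = f (q s) := mem_filter

lemma fam_subset {n : ℕ} {ι κ : Type*} (A : Finset (Perm (Fin n))) (p q : κ → ι) (S : Finset κ)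
    (f : ι → Fin n) : fam A p q S f ⊆ A := filter_subset _ _

/-- The assignments `f` all of whose pairs `(f (p s), f (q s))` are edges of the graph of `A`, and
which are nevertheless realised simultaneously by too few members of `A`. -/
def bad {n : ℕ} {ι κ : Type*} [Fintype ι] [DecidableEq ι]
    (A : Finset (Perm (Fin n))) (p q : κ → ι) (S : Finset κ) : Finset (ι → Fin n) :=
  univ.filter fun f : ι → Fin n => (∀ s ∈ S, (f (p s), f (q s)) ∈ supp A) ∧
      (fam A p q S f).card * (2 * n ^ 2) ^ S.card < A.card

lemma mem_bad {n : ℕ} {ι κ : Type*} [Fintype ι] [DecidableEq ι]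
    {A : Finset (Perm (Fin n))} {p q : κ → ι} {S : Finset κ} {f : ι → Fin n} :
    f ∈ bad A p q S ↔ (∀ s ∈ S, (f (p s), f (q s)) ∈ supp A) ∧
      (fam A p q S f).card * (2 * n ^ 2) ^ S.card < A.card := by
  simp [bad]

/-- Bad assignments are rare when all the variables `p s`, `q s` are distinct. Revealing the pairs
one at a time, a first failure at the pair `s` means that `(f (p s), f (q s))` is a light edge for
the family determined by the earlier pairs, and `card_light` bounds the number of such edges. -/
lemma card_bad {n : ℕ} {ι κ : Type*} [Fintype ι] [DecidableEq ι] [Fintype κ] [DecidableEq κ]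
    {A : Finset (Perm (Fin n))} (hA : IsStable A) (hne : A.Nonempty) (p q : κ → ι)
    (hpq : Function.Injective (Sum.elim p q)) (m : ℕ)
    (hm : 2 * (2 * n ^ 2) ^ Fintype.card κ ≤ 2 ^ m)
    (hn : 0 < n) (S : Finset κ) :
    (bad A p q S).card * n ^ 2 ≤ S.card * (n * m * n ^ Fintype.card ι) := by
  induction S using Finset.induction_on with
  | empty => simp [bad, fam]
  | insert s S hs ih =>
    -- `X` collects the assignments for which the failure occurs exactly at the new pair `s`.
    set X := univ.filter fun f : ι → Fin n => (f (p s), f (q s)) ∈ supp A ∧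
      A.card ≤ (fam A p q S f).card * (2 * n ^ 2) ^ S.card ∧
      ((fam A p q S f).filter fun a => a (f (p s)) = f (q s)).card * (2 * n ^ 2)
        < (fam A p q S f).card with hX
    have hXc : X.card * n ^ 2 ≤ n * m * n ^ Fintype.card ι := by
      refine card_mul_sq_le X (p s) (q s) (fun h => by simpa using @hpq (.inl s) (.inr s) h) _ ?_
      intro f
      have hfam : ∀ e : Fin n × Fin n, fam A p q S
          (Function.update (Function.update f (p s) e.1) (q s) e.2) = fam A p q S f := by
        intro e
        ext a
        rw [mem_fam, mem_fam]
        refine and_congr_right fun _ => forall₂_congr fun t ht => ?_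
        have hts : t ≠ s := fun h => hs (h ▸ ht)
        have n1 : p t ≠ p s := fun h => hts (by simpa using @hpq (.inl t) (.inl s) h)
        have n2 : p t ≠ q s := fun h => by simpa using @hpq (.inl t) (.inr s) h
        have n3 : q t ≠ p s := fun h => by simpa using @hpq (.inr t) (.inl s) h
        have n4 : q t ≠ q s := fun h => hts (by simpa using @hpq (.inr t) (.inr s) h)
        simp [n1, n2, n3, n4]
      have hps : p s ≠ q s := fun h => by simpa using @hpq (.inl s) (.inr s) h
      by_cases hc : A.card ≤ (fam A p q S f).card * (2 * n ^ 2) ^ S.card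
      · refine le_trans (card_le_card ?_) (card_light hA (fam_subset A p q S f) hne hc (m := m) ?_)
        · intro e he
          simp only [hX, mem_filter, mem_univ, true_and, hfam] at he
          simp only [Function.update_self, Function.update_of_ne hps] at he
          exact mem_filter.2 ⟨he.1, he.2.2⟩
        · refine le_trans ?_ hm
          gcongr
          · nlinarith
          · exact card_le_univ S
      · rw [card_eq_zero.2]
        · exact Nat.zero_le _
        · refine filter_eq_empty_iff.2 fun e _ he => hc ?_
          simp only [hX, mem_filter, mem_univ, true_and, hfam] at he
          exact he.2.1
    rw [card_insert_of_notMem hs, add_mul, one_mul]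
    refine le_trans ?_ (Nat.add_le_add ih hXc)
    rw [← add_mul]
    refine Nat.mul_le_mul_right _ (le_trans (card_le_card ?_) (card_union_le _ _))
    intro f hf
    rw [mem_bad] at hf
    simp only [mem_insert, forall_eq_or_imp, card_insert_of_notMem hs] at hf
    obtain ⟨⟨h1, h2⟩, h3⟩ := hf
    by_cases hc : A.card ≤ (fam A p q S f).card * (2 * n ^ 2) ^ S.card
    · refine mem_union_right _ (mem_filter.2 ⟨mem_univ _, h1, hc, ?_⟩)
      have e : fam A p q (insert s S) f
          = (fam A p q S f).filter fun a => a (f (p s)) = f (q s) := by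
        ext a; simp only [mem_filter, mem_fam, mem_insert, forall_eq_or_imp]; tauto
      rw [e] at h3
      have := h3.trans_le hc
      rw [pow_succ', ← mul_assoc] at this
      exact Nat.lt_of_mul_lt_mul_right this
    · exact mem_union_left _ (mem_bad.2 ⟨h2, not_le.1 hc⟩)

/-! ### Walks in the two graphs -/

lemma pow_apply_ne_of_cycleType {n : ℕ} {σ : Perm (Fin n)} (hσ : σ.cycleType = {n}) {j : ℕ}
    (hj : 0 < j) (hjn : j < n) (x : Fin n) : (σ ^ j) x ≠ x := by
  intro h
  have hc : σ.IsCycle := Perm.card_cycleType_eq_one.1 (by rw [hσ]; simp)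
  have hs : σ.support.card = n := by rw [← Perm.sum_cycleType, hσ]; simp
  have hsu : σ.support = univ := by
    rw [← card_eq_iff_eq_univ, hs]; simp
  have hx : σ x ≠ x := by rw [← Perm.mem_support, hsu]; exact mem_univ _
  have h1 : σ ^ j = 1 := hc.pow_eq_one_iff.2 ⟨x, hx, h⟩
  have := orderOf_le_of_pow_eq_one hj h1
  rw [hc.orderOf, hs] at this
  omega

/-- A walk has vertices `v₀, …, v_L` (the variables `.inl i`) and intermediate vertices
`u₀, …, u_L` (the variables `.inr i`), the last of which, `u_L`, is free. `slot r s` is the variable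
holding the intermediate vertex of step `s` when `u_L` is used in place of `u_r`. -/
abbrev slot {L : ℕ} (r s : Fin L) : Fin (L + 1) ⊕ Fin (L + 1) :=
  .inr (if s = r then Fin.last L else s.castSucc)

/-- If `a` realises the edges into `v_{s+1}` with `u_r` replaced by `u_L`, and `b` the edges out of
`v_s` with `u_{r'}` replaced by the same `u_L`, then `a * b` runs along the walk from `v_{r+1}` to
`v_{r'}`, and its next step passes through `u_L` and returns to `v_{r+1}`. So `a * b` has a cycle of
length at most `r' - r < n`. -/
lemma closing {n L : ℕ} (hL : L ≤ n) {a b : Perm (Fin n)} (hab : (a * b).cycleType = {n})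
    (f : Fin (L + 1) ⊕ Fin (L + 1) → Fin n) {r r' : Fin L} (hr : r < r')
    (ha : ∀ s : Fin L, a (f (slot r s)) = f (.inl s.succ))
    (hb : ∀ s : Fin L, b (f (.inl s.castSucc)) = f (slot r' s)) : False := by
  have key : ∀ i (hi : r.1 + 1 + i ≤ r'.1), ((a * b) ^ i) (f (.inl r.succ))
      = f (.inl ⟨r.1 + 1 + i, by omega⟩) := by
    intro i
    induction i with
    | zero => intro _; rfl
    | succ i ih =>
      intro hi
      have h1 : r.1 + 1 + i < L := by omega
      rw [pow_succ', Perm.mul_apply, ih (by omega), Perm.mul_apply]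
      have e1 := hb ⟨r.1 + 1 + i, h1⟩
      have e2 := ha ⟨r.1 + 1 + i, h1⟩
      rw [slot, if_neg (by rw [Fin.ext_iff]; simp only; omega)] at e1 e2
      exact (congrArg a e1).trans e2
  have hlt : r.1 < r'.1 := hr
  have h1 := key (r'.1 - r.1 - 1) (by omega)
  have h2 := hb r'
  have h3 := ha r
  rw [slot, if_pos rfl] at h2 h3
  refine pow_apply_ne_of_cycleType hab (j := r'.1 - r.1) (by omega) (by omega) (f (.inl r.succ)) ?_
  have e : r'.1 - r.1 = (r'.1 - r.1 - 1) + 1 := by omega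
  rw [e, pow_succ', Perm.mul_apply, h1, Perm.mul_apply]
  have e' : (⟨r.1 + 1 + (r'.1 - r.1 - 1), by omega⟩ : Fin (L + 1)) = r'.castSucc := by
    rw [Fin.ext_iff]; simp only [Fin.val_castSucc]; omega
  rw [e', h2, h3]

/-- The possible intermediate vertices of a step from `y` to `y'` that first uses an edge of `H` and
then an edge of `G`. -/
def mid {n : ℕ} (G H : Finset (Fin n × Fin n)) (y y' : Fin n) : Finset (Fin n) :=
  univ.filter fun x => (y, x) ∈ H ∧ (x, y') ∈ G

/-- Walks `v₀, u₀, v₁, …, u_{L-1}, v_L` alternating between edges of `H` and of `G`, together with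
an arbitrary vertex `u_L`. -/
def walks {n : ℕ} (L : ℕ) (G H : Finset (Fin n × Fin n)) :
    Finset (Fin (L + 1) ⊕ Fin (L + 1) → Fin n) :=
  univ.filter fun f => ∀ s : Fin L,
    f (.inr s.castSucc) ∈ mid G H (f (.inl s.castSucc)) (f (.inl s.succ))

/-- The number of pairs consisting of a step of the walk and an intermediate vertex for it. -/
def total {n L : ℕ} (G H : Finset (Fin n × Fin n)) (f : Fin (L + 1) ⊕ Fin (L + 1) → Fin n) : ℕ :=
  ∑ s : Fin L, (mid G H (f (.inl s.castSucc)) (f (.inl s.succ))).card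

/-- The inequality of arithmetic and geometric means. -/
lemma prod_mul_pow_le {L : ℕ} (x : Fin L → ℕ) {S : ℕ} (h : ∑ s, x s ≤ S) :
    (∏ s, x s) * L ^ L ≤ S ^ L := by
  rcases Nat.eq_zero_or_pos L with h0 | hL
  · subst h0; simp
  have hLr : (0 : ℝ) < L := by exact_mod_cast hL
  have h1 := Real.geom_mean_le_arith_mean (univ : Finset (Fin L)) (fun _ => 1) (fun s => (x s : ℝ))
    (by simp) (by simpa using hLr) (by simp)
  simp only [Real.rpow_one, one_mul, sum_const, card_univ, Fintype.card_fin, nsmul_eq_mul,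
    mul_one] at h1
  have h2 : ((∏ s, (x s : ℝ))) ≤ ((∑ s, (x s : ℝ)) / L) ^ L := by
    have h3 := pow_le_pow_left₀ (by positivity) h1 L
    rwa [← Real.rpow_natCast, ← Real.rpow_mul (by positivity), inv_mul_cancel₀ hLr.ne',
      Real.rpow_one] at h3
  rw [div_pow, le_div_iff₀ (by positivity)] at h2
  have h4 : (∑ s, (x s : ℝ)) ≤ S := by exact_mod_cast h
  have h5 : (∏ s, (x s : ℝ)) * (L : ℝ) ^ L ≤ (S : ℝ) ^ L := h2.trans (by gcongr)
  exact_mod_cast h5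

/-- For given `v₀, …, v_L` the number of choices of `u₀, …, u_{L-1}` is a product of `L` factors
whose sum is `total`. If that sum is below `2 n`, the product is at most `(2 n / L) ^ L`, which saves
a factor of about `L ^ L` over all tuples. -/
lemma card_walks_small {n L : ℕ} (G H : Finset (Fin n × Fin n)) :
    ((walks L G H).filter fun f => total G H f < 2 * n).card * L ^ L
      ≤ 2 ^ L * n ^ (2 * L + 2) := by
  rcases Nat.eq_zero_or_pos L with h0 | hL
  · subst h0
    simpa using card_le_univ ((walks 0 G H).filter fun f => total G H f < 2 * n)
  set C := n * (2 * n) ^ L / L ^ L with hC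
  have hpos : 0 < L ^ L := by positivity
  have hfib := card_le_mul_card_image_of_maps_to
    (s := (walks L G H).filter fun f => total G H f < 2 * n)
    (t := (univ : Finset (Fin (L + 1) → Fin n))) (f := fun f i => f (.inl i))
    (fun _ _ => mem_univ _) C ?_
  · calc _ ≤ C * (univ : Finset (Fin (L + 1) → Fin n)).card * L ^ L := Nat.mul_le_mul_right _ hfib
      _ = C * L ^ L * n ^ (L + 1) := by simp; ring
      _ ≤ n * (2 * n) ^ L * n ^ (L + 1) := Nat.mul_le_mul_right _ (Nat.div_mul_le_self _ _)
      _ = _ := by rw [mul_pow]; ring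
  · intro v _
    rw [hC, Nat.le_div_iff_mul_le hpos]
    rcases (((walks L G H).filter fun f => total G H f < 2 * n).filter
      fun f => (fun i => f (.inl i)) = v).eq_empty_or_nonempty with he | ⟨g, hg⟩
    · rw [he]; simp
    rw [mem_filter, mem_filter] at hg
    obtain ⟨⟨_, hg⟩, rfl⟩ := hg
    have hp := prod_mul_pow_le
      (fun s : Fin L => (mid G H (g (.inl s.castSucc)) (g (.inl s.succ))).card) hg.le
    calc _ ≤ ((univ : Finset (Fin n)) ×ˢ Fintype.piFinset fun s : Fin L =>
            mid G H (g (.inl s.castSucc)) (g (.inl s.succ))).card * L ^ L := ?_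
      _ = n * ((∏ s : Fin L, (mid G H (g (.inl s.castSucc)) (g (.inl s.succ))).card) * L ^ L) := by
          simp; ring
      _ ≤ _ := Nat.mul_le_mul_left _ hp
    refine Nat.mul_le_mul_right _ (card_le_card_of_injOn
      (fun f => (f (.inr (Fin.last L)), fun s => f (.inr s.castSucc))) ?_ ?_)
    · intro f hf
      simp only [coe_filter, mem_filter, Set.mem_ofPred_eq, walks, mem_univ, true_and] at hf
      simp only [coe_product, Set.mem_prod, mem_coe, mem_univ, true_and, Fintype.mem_piFinset]
      intro s
      have h1 := congrFun hf.2 s.castSucc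
      have h2 := congrFun hf.2 s.succ
      rw [← h1, ← h2]
      exact hf.1.1 s
    · intro f hf f' hf' h
      simp only [coe_filter, Set.mem_ofPred_eq] at hf hf'
      simp only [Prod.mk.injEq] at h
      ext i
      rcases i with i | i
      · exact congrArg Fin.val ((congrFun hf.2 i).trans (congrFun hf'.2 i).symm)
      · induction i using Fin.lastCases with
        | last => rw [h.1]
        | cast i => exact congrArg Fin.val (congrFun h.2 i)

/-- Walks whose free vertex `u_L` can serve as the intermediate vertex of two different steps. -/
def closable {n : ℕ} (L : ℕ) (G H : Finset (Fin n × Fin n)) :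
    Finset (Fin (L + 1) ⊕ Fin (L + 1) → Fin n) :=
  (walks L G H).filter fun f => ∃ r r' : Fin L, r < r' ∧
    f (.inr (Fin.last L)) ∈ mid G H (f (.inl r.castSucc)) (f (.inl r.succ)) ∧
    f (.inr (Fin.last L)) ∈ mid G H (f (.inl r'.castSucc)) (f (.inl r'.succ))

/-- If `total ≥ 2 n`, at least `n / L` values of `u_L` lie in two of the `L` sets of intermediate
vertices, so re-choosing `u_L` makes the walk closable with probability at least `1 / L`. -/
lemma card_walks_large {n L : ℕ} (hn : 0 < n) (G H : Finset (Fin n × Fin n)) :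
    ((walks L G H).filter fun f => 2 * n ≤ total G H f).card ≤ L * (closable L G H).card := by
  set W := (walks L G H).filter fun f => 2 * n ≤ total G H f with hW
  set x : Fin (L + 1) ⊕ Fin (L + 1) := .inr (Fin.last L) with hx
  have hinl : ∀ (f : Fin (L + 1) ⊕ Fin (L + 1) → Fin n) y i,
      Function.update f x y (.inl i) = f (.inl i) := fun f y i => by simp [hx]
  have hinr : ∀ (f : Fin (L + 1) ⊕ Fin (L + 1) → Fin n) y (i : Fin L),
      Function.update f x y (.inr i.castSucc) = f (.inr i.castSucc) := fun f y i => by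
    rw [Function.update_of_ne]
    simp [hx]
  have h1 : ∀ f ∈ W,
      n ≤ L * (univ.filter fun y => Function.update f x y ∈ closable L G H).card := by
    intro f hf
    rw [hW, mem_filter] at hf
    set Y := univ.filter fun y => Function.update f x y ∈ closable L G H with hY
    set N : Fin L → Finset (Fin n) :=
      fun s => mid G H (f (.inl s.castSucc)) (f (.inl s.succ)) with hN
    have h2 : total G H f = ∑ y : Fin n, (univ.filter fun s => y ∈ N s).card := by
      unfold total
      simp only [card_filter]
      rw [sum_comm]
      refine sum_congr rfl fun s _ => ?_
      simp [hN]
    have h3 : ∀ y : Fin n, (univ.filter fun s => y ∈ N s).card ≤ 1 + if y ∈ Y then L else 0 := by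
      intro y
      split_ifs with hy
      · have := card_le_univ (univ.filter fun s => y ∈ N s)
        simp at this
        omega
      · rw [add_zero, card_le_one]
        intro r hr r' hr'
        by_contra hne
        simp only [mem_filter, mem_univ, true_and] at hr hr'
        refine hy ?_
        simp only [hY, mem_filter, mem_univ, true_and, closable, walks, hinl, hinr]
        refine ⟨(mem_filter.1 hf.1).2, ?_⟩
        rw [← hx, Function.update_self]
        rcases lt_or_gt_of_ne hne with h | h
        · exact ⟨r, r', h, hr, hr'⟩
        · exact ⟨r', r, h, hr', hr⟩
    have h4 : total G H f ≤ n + L * Y.card := by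
      rw [h2]
      refine (sum_le_sum fun y _ => h3 y).trans ?_
      rw [sum_add_distrib]
      simp [mul_comm]
    omega
  have h2 : ∑ f ∈ W, (univ.filter fun y => Function.update f x y ∈ closable L G H).card
      ≤ (closable L G H).card * n := by
    rw [← card_sigma]
    calc _ ≤ (closable L G H ×ˢ (univ : Finset (Fin n))).card := ?_
      _ = _ := by simp
    refine card_le_card_of_injOn (fun z => (Function.update z.1 x z.2, z.1 x)) ?_ ?_
    · rintro ⟨f, y⟩ h
      simp only [coe_sigma, Set.mem_sigma_iff, mem_coe, mem_filter, mem_univ, true_and] at h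
      simpa using h.2
    · rintro ⟨f, y⟩ _ ⟨f', y'⟩ _ h
      simp only [Prod.mk.injEq] at h
      have hy := congrFun h.1 x
      simp only [Function.update_self] at hy
      subst hy
      have : f = f' := by
        ext i
        by_cases hi : i = x
        · rw [hi, h.2]
        · have := congrFun h.1 i
          simp only [Function.update_of_ne hi] at this
          rw [this]
      rw [this]
  refine Nat.le_of_mul_le_mul_right (c := n) ?_ hn
  calc W.card * n = ∑ f ∈ W, n := by simp
    _ ≤ ∑ f ∈ W, L * (univ.filter fun y => Function.update f x y ∈ closable L G H).card :=
        sum_le_sum h1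
    _ = L * _ := (mul_sum ..).symm
    _ ≤ L * ((closable L G H).card * n) := Nat.mul_le_mul_left _ h2
    _ = _ := by ring

/-- A closable walk which is bad neither for `A` (with `u_r` replaced by `u_L`) nor for `B` (with
`u_{r'}` replaced by `u_L`) yields permutations `a ∈ A` and `b ∈ B` as in `closing`. Hence every
closable walk is bad, and closable walks are rare. -/
lemma card_closable {n L m : ℕ} (hn : 0 < n) (hL : L ≤ n) {A B : Finset (Perm (Fin n))}
    (hA : IsStable A) (hB : IsStable B) (hA0 : A.Nonempty) (hB0 : B.Nonempty)
    (hAB : ∀ a ∈ A, ∀ b ∈ B, (a * b).cycleType = {n})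
    (hm : 2 * (2 * n ^ 2) ^ L ≤ 2 ^ m) :
    (closable L (supp A) (supp B)).card * n ^ 2 ≤ 2 * L ^ 2 * m * n * n ^ (2 * L + 2) := by
  have hm' : 2 * (2 * n ^ 2) ^ Fintype.card (Fin L) ≤ 2 ^ m := by simpa using hm
  set badA : Fin L → Finset (Fin (L + 1) ⊕ Fin (L + 1) → Fin n) := fun r =>
    bad A (slot r) (fun s => .inl s.succ) univ with hbA
  set badB : Fin L → Finset (Fin (L + 1) ⊕ Fin (L + 1) → Fin n) := fun r =>
    bad B (fun s => .inl s.castSucc) (slot r) univ with hbB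
  have hpinj : ∀ r s t : Fin L, (if s = r then Fin.last L else s.castSucc)
      = (if t = r then Fin.last L else t.castSucc) → s = t := by
    intro r s t h
    split_ifs at h with h1 h2 h2
    · rw [h1, h2]
    · exact absurd h.symm t.castSucc_lt_last.ne
    · exact absurd h s.castSucc_lt_last.ne
    · exact Fin.castSucc_injective _ h
  have cA : ∀ r, (badA r).card * n ^ 2 ≤ L * (n * m * n ^ (2 * L + 2)) := by
    intro r
    have := card_bad hA hA0 (slot r) (fun s : Fin L => .inl s.succ) ?_ m hm' hn univ
    · refine this.trans_eq ?_
      have e : L + 1 + (L + 1) = 2 * L + 2 := by ring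
      simp [e]
    · rintro (s | s) (t | t) h
      · rw [hpinj r s t (by simpa using h)]
      · simp at h
      · simp at h
      · simpa using h
  have cB : ∀ r, (badB r).card * n ^ 2 ≤ L * (n * m * n ^ (2 * L + 2)) := by
    intro r
    have := card_bad hB hB0 (fun s : Fin L => .inl s.castSucc) (slot r) ?_ m hm' hn univ
    · refine this.trans_eq ?_
      have e : L + 1 + (L + 1) = 2 * L + 2 := by ring
      simp [e]
    · rintro (s | s) (t | t) h
      · simpa using h
      · simp at h
      · simp at h
      · rw [hpinj r s t (by simpa using h)]
  have hsub : closable L (supp A) (supp B) ⊆ univ.biUnion badA ∪ univ.biUnion badB := by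
    intro f hf
    simp only [closable, walks, mid, mem_filter, mem_univ, true_and] at hf
    obtain ⟨hw, r, r', hr, h1, h2⟩ := hf
    by_contra hcon
    simp only [mem_union, mem_biUnion, mem_univ, true_and, not_or, not_exists] at hcon
    have kA := hcon.1 r
    have kB := hcon.2 r'
    simp only [hbA, hbB, mem_bad, mem_univ, not_and, not_lt, forall_const] at kA kB
    have kA' := kA fun s => by
      unfold slot
      split_ifs with h
      · rw [h]; exact h1.2
      · exact (hw s).2
    have kB' := kB fun s => by
      unfold slot
      split_ifs with h
      · rw [h]; exact h2.1
      · exact (hw s).1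
    have eA : (fam A (slot r) (fun s => .inl s.succ) univ f).Nonempty := by
      rw [nonempty_iff_ne_empty]
      intro h
      rw [h] at kA'
      have := hA0.card_pos
      simp at kA'
      simp [kA'] at this
    have eB : (fam B (fun s => .inl s.castSucc) (slot r') univ f).Nonempty := by
      rw [nonempty_iff_ne_empty]
      intro h
      rw [h] at kB'
      have := hB0.card_pos
      simp at kB'
      simp [kB'] at this
    obtain ⟨a, ha⟩ := eA
    obtain ⟨b, hb⟩ := eB
    rw [mem_fam] at ha hb
    exact closing hL (hAB a ha.1 b hb.1) f hr (fun s => ha.2 s (mem_univ _))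
      (fun s => hb.2 s (mem_univ _))
  calc _ ≤ (∑ r, (badA r).card + ∑ r, (badB r).card) * n ^ 2 := by
        refine Nat.mul_le_mul_right _ ((card_le_card hsub).trans ((card_union_le _ _).trans ?_))
        exact Nat.add_le_add card_biUnion_le card_biUnion_le
    _ = ∑ r, (badA r).card * n ^ 2 + ∑ r, (badB r).card * n ^ 2 := by
        rw [add_mul, sum_mul, sum_mul]
    _ ≤ ∑ r : Fin L, L * (n * m * n ^ (2 * L + 2)) + ∑ r : Fin L, L * (n * m * n ^ (2 * L + 2)) :=
        Nat.add_le_add (sum_le_sum fun r _ => cA r) (sum_le_sum fun r _ => cB r)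
    _ = _ := by simp; ring

/-- With `L = 2 ^ (g + 1)`, the set of walks of length `L` has density at most `2 / 2 ^ (g L)` among
all tuples. -/
lemma card_walks {n g m : ℕ} (hn : 0 < n) (hL : 2 ^ (g + 1) ≤ n) {A B : Finset (Perm (Fin n))}
    (hA : IsStable A) (hB : IsStable B) (hA0 : A.Nonempty) (hB0 : B.Nonempty)
    (hAB : ∀ a ∈ A, ∀ b ∈ B, (a * b).cycleType = {n})
    (hm : 2 * (2 * n ^ 2) ^ 2 ^ (g + 1) ≤ 2 ^ m)
    (hE : 2 ^ (g * 2 ^ (g + 1)) * (2 * (2 ^ (g + 1)) ^ 3 * m) ≤ n) :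
    2 ^ (g * 2 ^ (g + 1)) * (walks (2 ^ (g + 1)) (supp A) (supp B)).card
      ≤ 2 * n ^ (2 * 2 ^ (g + 1) + 2) := by
  have h1 := card_walks_small (L := 2 ^ (g + 1)) (supp A) (supp B)
  have h2 := card_walks_large (L := 2 ^ (g + 1)) hn (supp A) (supp B)
  have h3 := card_closable hn hL hA hB hA0 hB0 hAB hm
  have h4 := card_filter_add_card_filter_not (s := walks (2 ^ (g + 1)) (supp A) (supp B))
    (fun f => total (supp A) (supp B) f < 2 * n)
  simp only [not_lt] at h4
  have h5 : (2 ^ (g + 1)) ^ 2 ^ (g + 1) = 2 ^ (g * 2 ^ (g + 1)) * 2 ^ 2 ^ (g + 1) := by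
    rw [← pow_mul, ← pow_add]; congr 1; ring
  rw [h5] at h1
  clear h5
  generalize 2 ^ (g * 2 ^ (g + 1)) = E at *
  generalize 2 ^ (g + 1) = L at *
  rw [← h4]
  have h6 : E * ((walks L (supp A) (supp B)).filter fun f =>
      total (supp A) (supp B) f < 2 * n).card ≤ n ^ (2 * L + 2) := by
    refine Nat.le_of_mul_le_mul_left (c := 2 ^ L) ?_ (by positivity)
    refine le_trans (le_of_eq ?_) h1
    ring
  have h7 : E * ((walks L (supp A) (supp B)).filter fun f =>
      2 * n ≤ total (supp A) (supp B) f).card ≤ n ^ (2 * L + 2) := by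
    refine Nat.le_of_mul_le_mul_left (c := n ^ 2) ?_ (by positivity)
    calc _ ≤ n ^ 2 * (E * (L * (closable L (supp A) (supp B)).card)) := by gcongr
      _ = E * L * ((closable L (supp A) (supp B)).card * n ^ 2) := by ring
      _ ≤ E * L * (2 * L ^ 2 * m * n * n ^ (2 * L + 2)) := by gcongr
      _ = E * (2 * L ^ 3 * m) * (n * n ^ (2 * L + 2)) := by ring
      _ ≤ n * (n * n ^ (2 * L + 2)) := by gcongr
      _ = _ := by ring
  rw [mul_add]
  omega

/-! ### The size of a rectangle -/

/-- A pair `(a, b)` is determined by the trajectory `v_j = (a b) ^ j x₀`, `u_j = b v_j` for `j < n`,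
since `a * b` is an `n`-cycle. Cutting the trajectory into `q` blocks of length `L + 1`, each of which
is a walk, and `rest` unrestricted pairs gives the bound. -/
lemma card_mul_card_le {n L q rest : ℕ} (x₀ : Fin n) (hq : q * (L + 1) + rest = n)
    {A B : Finset (Perm (Fin n))} (hAB : ∀ a ∈ A, ∀ b ∈ B, (a * b).cycleType = {n}) :
    A.card * B.card ≤ (walks L (supp A) (supp B)).card ^ q * (n ^ 2) ^ rest := by
  have key : ((Fintype.piFinset fun _ : Fin q => walks L (supp A) (supp B)) ×ˢ
      (univ : Finset (Fin rest → Fin n × Fin n))).card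
      = (walks L (supp A) (supp B)).card ^ q * (n ^ 2) ^ rest := by
    simp [sq]
  rw [← card_product, ← key]
  set v : Perm (Fin n) × Perm (Fin n) → ℕ → Fin n := fun z j => ((z.1 * z.2) ^ j) x₀ with hv
  set u : Perm (Fin n) × Perm (Fin n) → ℕ → Fin n := fun z j => z.2 (v z j) with hu
  have huv : ∀ z j, z.1 (u z j) = v z (j + 1) := fun z j => by
    simp only [hu, hv, pow_succ', Perm.mul_apply]
  refine card_le_card_of_injOn (fun z =>
    (fun t => Sum.elim (fun i => v z (t.1 * (L + 1) + i.1)) (fun i => u z (t.1 * (L + 1) + i.1)),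
     fun i => (v z (q * (L + 1) + i.1), u z (q * (L + 1) + i.1)))) ?_ ?_
  · rintro z hz
    rw [mem_coe, mem_product] at hz
    simp only [coe_product, Set.mem_prod, mem_coe, mem_univ, and_true, Fintype.mem_piFinset, walks,
      mid, supp, mem_filter, true_and, Sum.elim_inl, Sum.elim_inr]
    intro t s
    exact ⟨⟨z.2, hz.2, rfl⟩, ⟨z.1, hz.1, huv z _⟩⟩
  · rintro z hz z' hz' h
    rw [mem_coe, mem_product] at hz hz'
    simp only [Prod.mk.injEq] at h
    -- The two trajectories agree: `j` lies in block `j / (L + 1)` or in the final stretch.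
    have hvu : ∀ j < n, v z j = v z' j ∧ u z j = u z' j := by
      intro j hj
      by_cases hjq : j < q * (L + 1)
      · have h1 := congrFun h.1 ⟨j / (L + 1), Nat.div_lt_of_lt_mul (by rwa [mul_comm])⟩
        have hmod := Nat.mod_lt j (Nat.succ_pos L)
        have h2 := congrFun h1 (.inl ⟨j % (L + 1), hmod⟩)
        have h3 := congrFun h1 (.inr ⟨j % (L + 1), hmod⟩)
        simp only [Sum.elim_inl, Sum.elim_inr, Nat.div_add_mod'] at h2 h3
        exact ⟨h2, h3⟩
      · have h1 := congrFun h.2 ⟨j - q * (L + 1), by omega⟩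
        simp only [Prod.mk.injEq] at h1
        rwa [Nat.add_sub_cancel' (not_lt.1 hjq)] at h1
    have full : ∀ z ∈ A ×ˢ B, (∀ y, ∃ j < n, v z j = y) ∧ v z n = x₀ := by
      intro z hz
      rw [mem_product] at hz
      have ht := hAB z.1 hz.1 z.2 hz.2
      have hc : (z.1 * z.2).IsCycle := Perm.card_cycleType_eq_one.1 (by rw [ht]; simp)
      have hs : (z.1 * z.2).support.card = n := by rw [← Perm.sum_cycleType, ht]; simp
      have hsu : (z.1 * z.2).support = univ := by
        rw [← card_eq_iff_eq_univ, hs]; simp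
      have hx : ∀ x, (z.1 * z.2) x ≠ x := fun x => by
        rw [← Perm.mem_support, hsu]; exact mem_univ _
      refine ⟨fun y => ?_, ?_⟩
      · obtain ⟨i, hi, hy⟩ := (hc.sameCycle (hx x₀) (hx y)).exists_pow_eq'
        refine ⟨i, hi.trans_le ?_, hy⟩
        rw [hc.orderOf, hs]
      · have : (z.1 * z.2) ^ n = 1 := by
          have h1 := pow_orderOf_eq_one (z.1 * z.2)
          rwa [hc.orderOf, hs] at h1
        simp [hv, this]
    have f := full z (mem_product.2 hz)
    have f' := full z' (mem_product.2 hz')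
    have hb : z.2 = z'.2 := by
      ext y
      obtain ⟨j, hj, rfl⟩ := f.1 y
      have := (hvu j hj).2
      simp only [hu] at this
      rw [this, (hvu j hj).1]
    have ha : z.1 = z'.1 := by
      ext y
      obtain ⟨j, hj, hy⟩ := f.1 (z.2.symm y)
      have hy' : y = u z j := by simp [hu, hy]
      rw [hy', huv, (hvu j hj).2, huv]
      -- For `j + 1 = n` the trajectory is back at `x₀`.
      rcases Nat.lt_or_ge (j + 1) n with h1 | h1
      · rw [(hvu _ h1).1]
      · rw [show j + 1 = n by omega, f.2, f'.2]
    exact Prod.ext ha hb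

/-- Rectangles are small. The factor `8 ^ n` absorbs the passage to stable subsets (`4 ^ n`) and the
factor `2` of `card_walks` in each block. -/
lemma rect_bound {n g m : ℕ} (hL : 2 ^ (g + 1) ≤ n) {A B : Finset (Perm (Fin n))}
    (hAB : ∀ a ∈ A, ∀ b ∈ B, (a * b).cycleType = {n})
    (hm : 2 * (2 * n ^ 2) ^ 2 ^ (g + 1) ≤ 2 ^ m)
    (hE : 2 ^ (g * 2 ^ (g + 1)) * (2 * (2 ^ (g + 1)) ^ 3 * m) ≤ n) :
    A.card * B.card * 2 ^ (g * 2 ^ (g + 1) * (n / (2 ^ (g + 1) + 1))) ≤ 8 ^ n * (n ^ n) ^ 2 := by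
  have hn : 0 < n := lt_of_lt_of_le (by positivity) hL
  rcases A.eq_empty_or_nonempty with rfl | hA0
  · simp
  rcases B.eq_empty_or_nonempty with rfl | hB0
  · simp
  obtain ⟨A', hA', sA, cA⟩ := exists_stable hn.ne' A
  obtain ⟨B', hB', sB, cB⟩ := exists_stable hn.ne' B
  have hA'0 : A'.Nonempty := by
    rw [← card_pos] at hA0 ⊢
    exact Nat.pos_of_mul_pos_left (hA0.trans_le cA)
  have hB'0 : B'.Nonempty := by
    rw [← card_pos] at hB0 ⊢
    exact Nat.pos_of_mul_pos_left (hB0.trans_le cB)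
  have hAB' : ∀ a ∈ A', ∀ b ∈ B', (a * b).cycleType = {n} :=
    fun a ha b hb => hAB a (hA' ha) b (hB' hb)
  have h1 := card_walks hn hL sA sB hA'0 hB'0 hAB' hm hE
  have hdiv := Nat.div_add_mod' n (2 ^ (g + 1) + 1)
  have h2 := card_mul_card_le ⟨0, hn⟩ hdiv hAB'
  have hqn : n / (2 ^ (g + 1) + 1) ≤ n := Nat.div_le_self _ _
  generalize n / (2 ^ (g + 1) + 1) = q at *
  generalize n % (2 ^ (g + 1) + 1) = r at *
  rw [pow_mul 2 (g * 2 ^ (g + 1)) q]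
  generalize 2 ^ (g * 2 ^ (g + 1)) = E at *
  generalize 2 ^ (g + 1) = L at *
  calc _ ≤ (2 ^ n * A'.card) * (2 ^ n * B'.card) * E ^ q := by gcongr
    _ = 4 ^ n * (A'.card * B'.card) * E ^ q := by
        rw [show 4 = 2 * 2 from rfl, mul_pow]; ring
    _ ≤ 4 ^ n * ((walks L (supp A') (supp B')).card ^ q * (n ^ 2) ^ r) * E ^ q := by gcongr
    _ = 4 ^ n * (E * (walks L (supp A') (supp B')).card) ^ q * (n ^ 2) ^ r := by
        rw [mul_pow]; ring
    _ ≤ 4 ^ n * (2 * n ^ (2 * L + 2)) ^ q * (n ^ 2) ^ r := by gcongr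
    _ = 4 ^ n * 2 ^ q * n ^ (2 * (q * (L + 1) + r)) := by
        rw [mul_pow, ← pow_mul, ← pow_mul, mul_add 2, pow_add]; ring
    _ = 4 ^ n * 2 ^ q * (n ^ n) ^ 2 := by rw [hdiv, ← pow_mul, mul_comm 2]
    _ ≤ 4 ^ n * 2 ^ n * (n ^ n) ^ 2 := by
        gcongr
        norm_num
    _ = 8 ^ n * (n ^ n) ^ 2 := by rw [← mul_pow 4 2 n]; norm_num

lemma pow_self_le (n : ℕ) : n ^ n ≤ 4 ^ n * n.factorial := by
  have h := Real.pow_div_factorial_le_exp (n : ℝ) (by positivity) n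
  have h2 : Real.exp n ≤ 4 ^ n := by
    rw [← Real.exp_one_pow]
    exact pow_le_pow_left₀ (by positivity) (by linarith [Real.exp_one_lt_d9]) n
  rw [div_le_iff₀ (by positivity)] at h
  have h3 : (n : ℝ) ^ n ≤ 4 ^ n * n.factorial := h.trans (by gcongr)
  exact_mod_cast h3

/-! ### Covers and the choice of parameters -/

/-- The pairs covered number `n! (n - 1)!`: the first permutation is arbitrary and the product is
one of the `(n - 1)!` full cycles. -/
lemma card_ones {n : ℕ} (hn : 2 ≤ n) :
    ((univ : Finset (Perm (Fin n) × Perm (Fin n))).filter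
      fun z => (z.2 * z.1).cycleType = {n}).card = n.factorial * (n - 1).factorial := by
  have h1 : ((univ : Finset (Perm (Fin n))).filter fun g => g.cycleType = {n}).card
      = (n - 1).factorial := by
    rw [Perm.card_of_cycleType_singleton hn (by simp)]
    simp
  have h2 : (univ : Finset (Perm (Fin n))).card = n.factorial := by
    rw [card_univ, Fintype.card_perm, Fintype.card_fin]
  rw [← h1, ← h2, ← card_product]
  refine card_bij' (fun z _ => (z.1, z.2 * z.1)) (fun z _ => (z.1, z.2 * z.1⁻¹)) ?_ ?_ ?_ ?_ <;>
    simp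

/-- Comparing the number of pairs to be covered with the size of a rectangle. The factor
`2 ^ (32 n)` is the fourth power of `2 ^ (8 n)`, which absorbs `n`, `8 ^ n` and the error `4 ^ (2 n)` in
`n ^ n ≤ 4 ^ n n!`; the fourth power turns the exponent `g L ⌊n / (L + 1)⌋` into at least `g n`. -/
lemma cover_bound {n g m : ℕ} (hn : 2 ≤ n) (hL : 2 ^ (g + 1) + 1 ≤ n)
    (R : Finset (Finset (Perm (Fin n)) × Finset (Perm (Fin n)))) (hR : IsRectCover n R)
    (hm : 2 * (2 * n ^ 2) ^ 2 ^ (g + 1) ≤ 2 ^ m)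
    (hE : 2 ^ (g * 2 ^ (g + 1)) * (2 * (2 ^ (g + 1)) ^ 3 * m) ≤ n) :
    2 ^ (g * n) ≤ R.card ^ 4 * 2 ^ (32 * n) := by
  set K := g * 2 ^ (g + 1) * (n / (2 ^ (g + 1) + 1)) with hK
  have h1 : n.factorial * (n - 1).factorial ≤ ∑ r ∈ R, r.1.card * r.2.card := by
    rw [← card_ones hn]
    simp only [← card_product]
    refine (card_le_card (t := R.biUnion fun r => r.1 ×ˢ r.2) ?_).trans card_biUnion_le
    intro z hz
    obtain ⟨r, hr, h⟩ := hR.2 z.1 z.2 (mem_filter.1 hz).2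
    exact mem_biUnion.2 ⟨r, hr, mem_product.2 h⟩
  have h2 : n.factorial * (n - 1).factorial * 2 ^ K ≤ R.card * (8 ^ n * (n ^ n) ^ 2) := by
    calc _ ≤ (∑ r ∈ R, r.1.card * r.2.card) * 2 ^ K := Nat.mul_le_mul_right _ h1
      _ = ∑ r ∈ R, r.1.card * r.2.card * 2 ^ K := sum_mul ..
      _ ≤ ∑ r ∈ R, 8 ^ n * (n ^ n) ^ 2 := by
          refine sum_le_sum fun r hr => ?_
          rw [mul_comm r.1.card]
          exact rect_bound (by omega) (fun a ha b hb => (hR.1 r hr).2.2 b hb a ha) hm hE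
      _ = _ := by simp
  have h3 : 2 ^ K ≤ R.card * 2 ^ (8 * n) := by
    refine Nat.le_of_mul_le_mul_left (c := n.factorial ^ 2) ?_ (by positivity)
    calc n.factorial ^ 2 * 2 ^ K = n * (n.factorial * (n - 1).factorial * 2 ^ K) := by
          rw [sq]
          nth_rewrite 2 [← Nat.mul_factorial_pred (by omega : n ≠ 0)]
          ring
      _ ≤ 2 ^ n * (R.card * (8 ^ n * (4 ^ n * n.factorial) ^ 2)) := by
          refine Nat.mul_le_mul Nat.lt_two_pow_self.le (h2.trans ?_)
          gcongr
          exact pow_self_le n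
      _ = n.factorial ^ 2 * (R.card * (2 * 8 * 4 ^ 2) ^ n) := by
          rw [mul_pow (2 * 8), mul_pow 2 8, ← pow_mul 4 2 n]; ring
      _ = _ := by rw [pow_mul]; norm_num
  have h4 : n ≤ 4 * (2 ^ (g + 1) * (n / (2 ^ (g + 1) + 1))) := by
    have := Nat.div_add_mod' n (2 ^ (g + 1) + 1)
    have hmod := Nat.mod_lt n (Nat.succ_pos (2 ^ (g + 1)))
    have hq : 1 ≤ n / (2 ^ (g + 1) + 1) := Nat.div_pos hL (Nat.succ_pos _)
    have hp : 1 ≤ 2 ^ (g + 1) := Nat.one_le_two_pow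
    generalize n / (2 ^ (g + 1) + 1) = q at *
    generalize n % (2 ^ (g + 1) + 1) = r at *
    generalize 2 ^ (g + 1) = L at *
    simp only [Nat.succ_eq_add_one] at hmod
    nlinarith
  calc 2 ^ (g * n) ≤ 2 ^ (K * 4) := by
        refine Nat.pow_le_pow_right (by norm_num) ?_
        calc g * n ≤ g * (4 * (2 ^ (g + 1) * (n / (2 ^ (g + 1) + 1)))) := by gcongr
          _ = K * 4 := by rw [hK]; ring
    _ = (2 ^ K) ^ 4 := pow_mul ..
    _ ≤ (R.card * 2 ^ (8 * n)) ^ 4 := by gcongr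
    _ = _ := by ring

/-- The hypotheses of `cover_bound` hold for `L = 2 ^ H` with `8 ^ H` about `log₂ n`, and this choice
makes `H` about a third of `log₂ log₂ n`. -/
lemma params {n H : ℕ} (hH : 2 ≤ H) (hHl : H = Nat.log 8 (Nat.log 2 n)) :
    2 ^ H + 1 ≤ n ∧ ∃ m, 2 * (2 * n ^ 2) ^ 2 ^ H ≤ 2 ^ m ∧
      2 ^ ((H - 1) * 2 ^ H) * (2 * (2 ^ H) ^ 3 * m) ≤ n := by
  set l := Nat.log 2 n with hl
  have hl0 : l ≠ 0 := by
    intro h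
    rw [h] at hHl
    simp at hHl
    omega
  have hn0 : n ≠ 0 := by
    intro h
    rw [h] at hl
    simp at hl
    omega
  have h1 : 8 ^ H ≤ l := hHl ▸ Nat.pow_log_le_self 8 hl0
  have h2 : l < 8 ^ (H + 1) := hHl ▸ Nat.lt_pow_succ_log_self (by norm_num) l
  have h3 : 2 ^ l ≤ n := Nat.pow_log_le_self 2 hn0
  have h4 : n < 2 ^ (l + 1) := Nat.lt_pow_succ_log_self (by norm_num) n
  have hx : H < 2 ^ H := Nat.lt_two_pow_self
  have h8 : 8 ^ H = (2 ^ H) ^ 3 := by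
    rw [show 8 = 2 ^ 3 from rfl, ← pow_mul, ← pow_mul, mul_comm]
  have hx4 : 2 ^ 2 ≤ 2 ^ H := Nat.pow_le_pow_right (by norm_num) hH
  have hexp : (H - 1) * 2 ^ H + (7 * H + 6) ≤ l := by
    refine le_trans ?_ h1
    rw [h8]
    have : (H - 1) * 2 ^ H ≤ 2 ^ H * 2 ^ H := Nat.mul_le_mul_right _ (by omega)
    generalize 2 ^ H = x at *
    nlinarith [Nat.mul_le_mul hx4 hx4, Nat.mul_le_mul (Nat.mul_le_mul hx4 hx4) hx4,
      Nat.mul_le_mul_right (x * x) hx4]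
  -- `2 n ^ 2 ≤ 2 ^ (2 l + 3)`, since `n < 2 ^ (l + 1)`.
  refine ⟨?_, (2 * l + 3) * 2 ^ H + 1, ?_, ?_⟩
  · calc 2 ^ H + 1 ≤ 2 ^ H + 2 ^ H := by omega
      _ = 2 ^ (H + 1) := by ring
      _ ≤ 2 ^ l := Nat.pow_le_pow_right (by norm_num) (by omega)
      _ ≤ n := h3
  · calc 2 * (2 * n ^ 2) ^ 2 ^ H ≤ 2 * (2 * (2 ^ (l + 1)) ^ 2) ^ 2 ^ H := by gcongr
      _ = _ := by
        rw [pow_succ 2 ((2 * l + 3) * 2 ^ H), pow_mul 2 (2 * l + 3), mul_comm 2]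
        congr 2
        ring
  · have hm : (2 * l + 3) * 2 ^ H + 1 ≤ 2 ^ (4 * H + 5) := by
      have e : 2 ^ (4 * H + 5) = 32 * (2 ^ H) ^ 3 * 2 ^ H := by
        rw [pow_add, mul_comm 4 H, pow_mul]; ring
      rw [e]
      rw [pow_succ, h8] at h2
      generalize 2 ^ H = x at *
      have : 64 ≤ x ^ 3 := by
        calc 64 = 4 ^ 3 := by norm_num
          _ ≤ x ^ 3 := by gcongr; exact hx4
      nlinarith
    calc _ ≤ 2 ^ ((H - 1) * 2 ^ H) * (2 * (2 ^ H) ^ 3 * 2 ^ (4 * H + 5)) := by gcongr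
      _ = 2 ^ ((H - 1) * 2 ^ H + (7 * H + 6)) := by
        rw [pow_add 2 ((H - 1) * 2 ^ H)]
        congr 1
        rw [← pow_mul, ← pow_succ', ← pow_add]
        congr 1
        ring
      _ ≤ 2 ^ l := Nat.pow_le_pow_right (by norm_num) hexp
      _ ≤ n := h3

lemma le_log_log (N n : ℕ) (h : 2 ^ 8 ^ N ≤ n) : N ≤ Nat.log 8 (Nat.log 2 n) := by
  refine Nat.le_log_of_pow_le (by norm_num) (Nat.le_log_of_pow_le (by norm_num) h)

lemma logb_logb_le {n H : ℕ} (hH : 2 ≤ H) (hHl : H = Nat.log 8 (Nat.log 2 n)) :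
    Real.logb 2 (Real.logb 2 n) ≤ 3 * (H + 1) := by
  have h2 : Nat.log 2 n < 8 ^ (H + 1) := hHl ▸ Nat.lt_pow_succ_log_self (by norm_num) _
  have h4 : n < 2 ^ (Nat.log 2 n + 1) := Nat.lt_pow_succ_log_self (by norm_num) n
  have hn : 2 ^ H + 1 ≤ n := (params hH hHl).1
  have hn1 : 1 < n := by have := Nat.one_le_two_pow (n := H); omega
  have h5 : Real.logb 2 n ≤ 2 ^ (3 * (H + 1)) := by
    have : (n : ℝ) ≤ (2 : ℝ) ^ (2 ^ (3 * (H + 1))) := by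
      rw [pow_mul]
      exact_mod_cast h4.le.trans (Nat.pow_le_pow_right (by norm_num) h2)
    rw [Real.logb_le_iff_le_rpow (by norm_num) (by positivity)]
    exact_mod_cast this
  rw [Real.logb_le_iff_le_rpow (by norm_num)
    (Real.logb_pos (by norm_num) (by exact_mod_cast hn1))]
  refine h5.trans_eq ?_
  rw [← Real.rpow_natCast]
  push_cast
  rfl

end MatchingCompat

/-- Raz–Spieker: there are `c > 0` and `k₀` such that for all `k ≥ k₀`,
every rectangle cover of `M_k` has size at least `2^(c·k·log log k)`
(logarithms to base 2). -/
theorem stmt_10 :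
    ∃ c : ℝ, 0 < c ∧ ∃ k₀ : ℕ, ∀ k : ℕ, k₀ ≤ k →
      ∀ R, IsRectCover k R →
        (2 : ℝ) ^ (c * k * Real.logb 2 (Real.logb 2 k)) ≤ (R.card : ℝ) := by
  -- `(H - 33) / 4 ≥ 3 (H + 1) / 24` as soon as `H ≥ 67`. The value of `N` is kept abstract so that
  -- the double exponential `2 ^ 8 ^ N` is never evaluated.
  obtain ⟨N, hN⟩ : ∃ N, N = 67 := ⟨_, rfl⟩
  refine ⟨1 / 24, by norm_num, 2 ^ 8 ^ N, fun k hk R hR => ?_⟩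
  have hH := MatchingCompat.le_log_log N k hk
  obtain ⟨H, hHl⟩ : ∃ H, H = Nat.log 8 (Nat.log 2 k) := ⟨_, rfl⟩
  rw [← hHl, hN] at hH
  obtain ⟨hL, m, hm, hE⟩ := MatchingCompat.params (by omega) hHl
  have hll := MatchingCompat.logb_logb_le (by omega) hHl
  have hk2 : 2 ≤ k := by have := Nat.one_le_two_pow (n := H); omega
  obtain ⟨g, rfl⟩ : ∃ g, H = g + 1 := ⟨H - 1, by omega⟩
  have hb := MatchingCompat.cover_bound hk2 hL R hR hm hE
  have hb' : (2 : ℝ) ^ ((g : ℝ) * k) ≤ (R.card : ℝ) ^ 4 * 2 ^ (32 * (k : ℝ)) := by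
    exact_mod_cast hb
  refine le_of_pow_le_pow_left₀ (n := 4) (by norm_num) (by positivity) ?_
  rw [← Real.rpow_natCast, ← Real.rpow_mul (by norm_num)]
  refine le_of_mul_le_mul_right (le_trans ?_ hb') (by positivity : (0 : ℝ) < 2 ^ (32 * (k : ℝ)))
  rw [← Real.rpow_add (by norm_num)]
  refine Real.rpow_le_rpow_of_exponent_le (by norm_num) ?_
  have hg : (66 : ℝ) ≤ g := by exact_mod_cast (by omega : 66 ≤ g)
  have hk0 : (0 : ℝ) ≤ k := by positivity
  push_cast at hll ⊢
  nlinarith [mul_le_mul_of_nonneg_left hll hk0, mul_le_mul_of_nonneg_left hg hk0]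
end

section
/- Let k ≥ 1 and let A·B be a rectangle in the graph G_k that contains at least one canonical solution, i.e., there exist A ∈ A and B ∈ B such that A ∪ B = I_ρ for some assignment ρ : [k] → {0,1}. Then either A contains at most one useful set, or B contains at most one useful set. -/
/-!
Let `T` be the union of all members of `𝒜` and `U` the union of all members of `ℬ`. Since `𝒜·ℬ` is a
rectangle, `T` and `U` are disjoint and no edge joins them, and every canonical solution covered by
the rectangle lies in `T ∪ U`. If `A ∪ B = I_ρ`, then `A = I_ρ ∩ T` and `B = I_ρ ∩ U`.

If `𝒜` has two distinct useful sets, then some vertex `x ∈ T` lies in exactly one of two covered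
canonical solutions `I_ρ`, `I_σ`, say in `I_ρ`. This forces a whole row `i` to lie in `T`
(`exists_row_subset`): wherever `ρ i ≠ σ i`, row `i` is contained in `I_ρ ∪ I_σ ⊆ T ∪ U`, and, being
a path, it lies entirely in `T` or entirely in `U`. If `x` is in a row, take that row; if `x = w_l`,
then `σ` satisfies the clause through a variable where `ρ` does not, and the neighbour of `w_l` in the
row of that variable cannot be in `U`.

Symmetrically, two distinct useful sets of `ℬ` give a row `j` inside `U`, and `i ≠ j`. The clause on
`i` and `j` falsified by a covered `ρ` has its vertex in `I_ρ ⊆ T ∪ U`, but that vertex has a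
neighbour in row `i` and one in row `j`, so it is in neither `T` nor `U`
(`not_rows_separated`).
-/

/-- A 2-CNF clause on `k` variables: an ordered pair of variables `a < b` together
with negation flags `na`, `nb`. There are `q = 4·C(k,2) = 2k(k-1)` such clauses. -/
structure ClauseT (k : ℕ) where
  a : Fin k
  b : Fin k
  na : Bool
  nb : Bool
  hab : a < b

/-- The column index `2(l-1) + n` of the copy of a literal associated with the `l`-th
clause (`l` zero-indexed here), with negation flag `n`. -/
def litIdx (q : ℕ) (l : Fin q) (neg : Bool) : Fin (2 * q) :=
  ⟨2 * l.val + (if neg then 1 else 0), by have := l.isLt; split <;> omega⟩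

/-- Vertices of the graph `G_k`: the literal vertices `v_{i,j}` (`i ∈ [k]`,
`j ∈ {0,…,2q-1}`) and the clause vertices `w_l` (`l ∈ [q]`). -/
abbrev Vtx (k q : ℕ) := (Fin k × Fin (2 * q)) ⊕ Fin q

/-- Adjacency in `G_k`, for a given enumeration `w` of all 2-clauses:
(i) `v_{i,j-1} ~ v_{i,j}`; (ii) `w_l` is adjacent exactly to
`v_{a_l, 2(l-1)+na_l}` and `v_{b_l, 2(l-1)+nb_l}`. -/
def GAdj {k q : ℕ} (w : Fin q → ClauseT k) : Vtx k q → Vtx k q → Prop :=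
  fun x y => match x, y with
  | Sum.inl (i, j), Sum.inl (i', j') =>
      i = i' ∧ (j.val + 1 = j'.val ∨ j'.val + 1 = j.val)
  | Sum.inl (i, j), Sum.inr l =>
      (i = (w l).a ∧ j = litIdx q l (w l).na) ∨ (i = (w l).b ∧ j = litIdx q l (w l).nb)
  | Sum.inr l, Sum.inl (i, j) =>
      (i = (w l).a ∧ j = litIdx q l (w l).na) ∨ (i = (w l).b ∧ j = litIdx q l (w l).nb)
  | Sum.inr _, Sum.inr _ => False

/-- Independent sets of `G_k`. -/
def IndepSet {k q : ℕ} (w : Fin q → ClauseT k) (S : Set (Vtx k q)) : Prop :=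
  ∀ u ∈ S, ∀ v ∈ S, ¬ GAdj w u v

/-- The canonical solution `I_ρ` for an assignment `ρ : [k] → {0,1}`: all literal
vertices `v_{i,j}` with `j ≡ ρ(i) (mod 2)`, together with all clause vertices `w_l`
whose clause is not satisfied by `ρ` (i.e. `ρ(a_l) ≠ na_l` and `ρ(b_l) ≠ nb_l`). -/
def canonical {k q : ℕ} (w : Fin q → ClauseT k) (ρ : Fin k → Bool) : Set (Vtx k q) :=
  fun x => match x with
  | Sum.inl (i, j) => j.val % 2 = (if ρ i then 1 else 0)
  | Sum.inr l => ρ (w l).a ≠ (w l).na ∧ ρ (w l).b ≠ (w l).nb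

/-- A rectangle `𝒜·ℬ` in `G_k`: two families of independent sets of `G_k` such that
every `A ∈ 𝒜` and `B ∈ ℬ` are disjoint and non-adjacent. -/
def IsRectangle {k q : ℕ} (w : Fin q → ClauseT k)
    (𝒜 ℬ : Set (Set (Vtx k q))) : Prop :=
  (∀ A ∈ 𝒜, IndepSet w A) ∧ (∀ B ∈ ℬ, IndepSet w B) ∧
    ∀ A ∈ 𝒜, ∀ B ∈ ℬ, Disjoint A B ∧ ∀ u ∈ A, ∀ v ∈ B, ¬ GAdj w u v

/-- `A` is a useful set of the side `𝒜`: `A ∈ 𝒜` and `A ∪ B` is a canonical solution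
for some `B ∈ ℬ`. -/
def UsefulA {k q : ℕ} (w : Fin q → ClauseT k) (𝒜 ℬ : Set (Set (Vtx k q)))
    (A : Set (Vtx k q)) : Prop :=
  A ∈ 𝒜 ∧ ∃ B ∈ ℬ, ∃ ρ : Fin k → Bool, A ∪ B = canonical w ρ

/-- `B` is a useful set of the side `ℬ`. -/
def UsefulB {k q : ℕ} (w : Fin q → ClauseT k) (𝒜 ℬ : Set (Set (Vtx k q)))
    (B : Set (Vtx k q)) : Prop :=
  B ∈ ℬ ∧ ∃ A ∈ 𝒜, ∃ ρ : Fin k → Bool, A ∪ B = canonical w ρ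

theorem GAdj.symm {k q : ℕ} {w : Fin q → ClauseT k} {x y : Vtx k q} (h : GAdj w x y) :
    GAdj w y x := by
  rcases x with ⟨i, j⟩ | l <;> rcases y with ⟨i', j'⟩ | l'
  · exact ⟨h.1.symm, h.2.symm⟩
  · exact h
  · exact h
  · exact h

/-- Rows are paths, hence connected: a row covered by two sets without an edge between them lies
in the first one as soon as it meets it. -/
theorem row_subset_of_mem {k q : ℕ} {w : Fin q → ClauseT k} {T U : Set (Vtx k q)}
    (hn : ∀ u ∈ T, ∀ v ∈ U, ¬ GAdj w u v) {i : Fin k}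
    (hcov : ∀ j, Sum.inl (i, j) ∈ T ∪ U) {j₀ : Fin (2 * q)} (hj₀ : Sum.inl (i, j₀) ∈ T)
    (j : Fin (2 * q)) : Sum.inl (i, j) ∈ T := by
  have step : ∀ a b : Fin (2 * q), (a.val + 1 = b.val ∨ b.val + 1 = a.val) →
      Sum.inl (i, a) ∈ T → Sum.inl (i, b) ∈ T := fun a b hab ha =>
    (hcov b).resolve_right fun hb => hn _ ha _ hb ⟨rfl, hab⟩
  have up : ∀ (n : ℕ) (a b : Fin (2 * q)), a.val + n = b.val →
      (Sum.inl (i, a) ∈ T ↔ Sum.inl (i, b) ∈ T) := by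
    intro n
    induction n with
    | zero =>
      intro a b h
      obtain rfl : a = b := Fin.ext h
      rfl
    | succ n ih =>
      intro a b h
      have hb := b.isLt
      let c : Fin (2 * q) := ⟨a.val + n, by omega⟩
      have hcb : c.val + 1 = b.val := by simp only [c]; omega
      exact (ih a c rfl).trans ⟨step c b (Or.inl hcb), step b c (Or.inr hcb)⟩
  rcases le_total j₀.val j.val with h | h
  · exact (up (j.val - j₀.val) j₀ j (by omega)).1 hj₀
  · exact (up (j₀.val - j.val) j j₀ (by omega)).2 hj₀

/-- Where `ρ` and `σ` differ, `I_ρ` takes one parity class of the row and `I_σ` the other. -/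
theorem row_covered {k q : ℕ} {w : Fin q → ClauseT k} {S : Set (Vtx k q)}
    {ρ σ : Fin k → Bool} (hρ : canonical w ρ ⊆ S) (hσ : canonical w σ ⊆ S) {i : Fin k}
    (hi : ρ i ≠ σ i) (j : Fin (2 * q)) : Sum.inl (i, j) ∈ S := by
  by_cases h : j.val % 2 = (if ρ i then 1 else 0)
  · exact hρ h
  · refine hσ (show j.val % 2 = (if σ i then 1 else 0) from ?_)
    cases h1 : ρ i <;> cases h2 : σ i <;> simp [h1, h2] at hi h ⊢ <;> omega

theorem litIdx_mem_canonical {k q : ℕ} {w : Fin q → ClauseT k} {ρ : Fin k → Bool} {i : Fin k}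
    {l : Fin q} {n : Bool} (h : ρ i = n) : Sum.inl (i, litIdx q l n) ∈ canonical w ρ := by
  subst h
  change (2 * l.val + (if ρ i then 1 else 0)) % 2 = (if ρ i then 1 else 0)
  split <;> omega

/-- A vertex of `T` at which two covered canonical solutions differ forces a row inside `T`. -/
theorem exists_row_subset {k q : ℕ} {w : Fin q → ClauseT k} {T U : Set (Vtx k q)}
    (hn : ∀ u ∈ T, ∀ v ∈ U, ¬ GAdj w u v) {ρ σ : Fin k → Bool}
    (hρ : canonical w ρ ⊆ T ∪ U) (hσ : canonical w σ ⊆ T ∪ U) {x : Vtx k q} (hxT : x ∈ T)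
    (hxρ : x ∈ canonical w ρ) (hxσ : x ∉ canonical w σ) :
    ∃ i, ∀ j, Sum.inl (i, j) ∈ T := by
  rcases x with ⟨i, j⟩ | l
  · have hi : ρ i ≠ σ i := by
      intro h
      apply hxσ
      change j.val % 2 = _ at hxρ
      rw [h] at hxρ
      exact hxρ
    exact ⟨i, row_subset_of_mem hn (row_covered hρ hσ hi) hxT⟩
  · have hx : ρ (w l).a ≠ (w l).na ∧ ρ (w l).b ≠ (w l).nb := hxρ
    have main : ∀ (i : Fin k) (n : Bool), ρ i ≠ n → σ i = n →
        GAdj w (Sum.inr l) (Sum.inl (i, litIdx q l n)) → ∃ i, ∀ j, Sum.inl (i, j) ∈ T := by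
      intro i n h1 h2 hadj
      have hT := (hσ (litIdx_mem_canonical (l := l) h2)).resolve_right
        fun hU => hn _ hxT _ hU hadj
      exact ⟨i, row_subset_of_mem hn (row_covered hρ hσ (h2 ▸ h1)) hT⟩
    by_cases ha : σ (w l).a = (w l).na
    · exact main _ _ hx.1 ha (Or.inl ⟨rfl, rfl⟩)
    · have hb : σ (w l).b = (w l).nb := by
        by_contra hb
        exact hxσ ⟨ha, hb⟩
      exact main _ _ hx.2 hb (Or.inr ⟨rfl, rfl⟩)

/-- If `T ∪ U` covers a canonical solution and no edge joins `T` to `U`, then `T` and `U` cannot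
each contain one of two distinct rows. -/
theorem not_rows_separated {k q : ℕ} {w : Fin q → ClauseT k} (hw : Function.Surjective w)
    {T U : Set (Vtx k q)} (hn : ∀ u ∈ T, ∀ v ∈ U, ¬ GAdj w u v) {ρ : Fin k → Bool}
    (hρ : canonical w ρ ⊆ T ∪ U) {i j : Fin k} (hij : i < j)
    (hi : ∀ m, Sum.inl (i, m) ∈ T) (hj : ∀ m, Sum.inl (j, m) ∈ U) : False := by
  obtain ⟨l, hl⟩ := hw ⟨i, j, !ρ i, !ρ j, hij⟩
  have hmem : Sum.inr l ∈ canonical w ρ := by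
    change ρ (w l).a ≠ (w l).na ∧ ρ (w l).b ≠ (w l).nb
    simp [hl]
  rcases hρ hmem with h | h
  · exact hn _ h _ (hj (litIdx q l (w l).nb)) (Or.inr ⟨by rw [hl], rfl⟩)
  · exact hn _ (hi (litIdx q l (w l).na)) _ h (Or.inl ⟨by rw [hl], rfl⟩)

/-- Two distinct sets `A = I_ρ ∩ T` and `A' = I_σ ∩ T` force a row inside `T`; the conclusion `0 < q`
says that this row is nonempty. -/
theorem exists_row_subset_of_ne {k q : ℕ} {w : Fin q → ClauseT k} {T U : Set (Vtx k q)}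
    (hd : Disjoint T U) (hn : ∀ u ∈ T, ∀ v ∈ U, ¬ GAdj w u v)
    {A A' B B' : Set (Vtx k q)} {ρ σ : Fin k → Bool}
    (hA : A ⊆ T) (hA' : A' ⊆ T) (hB : B ⊆ U) (hB' : B' ⊆ U)
    (hρ : A ∪ B = canonical w ρ) (hσ : A' ∪ B' = canonical w σ) (hne : A ≠ A') :
    0 < q ∧ ∃ i, ∀ j, Sum.inl (i, j) ∈ T := by
  have eq_inter : ∀ {C D : Set (Vtx k q)} {τ : Fin k → Bool}, C ⊆ T → D ⊆ U →
      C ∪ D = canonical w τ → ∀ x, x ∈ C ↔ x ∈ T ∧ x ∈ canonical w τ := by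
    intro C D τ hC hD h x
    rw [← h]
    exact ⟨fun hx => ⟨hC hx, Or.inl hx⟩,
      fun hx => hx.2.resolve_right fun hxD => Set.disjoint_left.1 hd hx.1 (hD hxD)⟩
  have cρ : canonical w ρ ⊆ T ∪ U := hρ ▸ Set.union_subset_union hA hB
  have cσ : canonical w σ ⊆ T ∪ U := hσ ▸ Set.union_subset_union hA' hB'
  obtain ⟨x, hx⟩ : ∃ x, ¬ (x ∈ A ↔ x ∈ A') := by
    by_contra! h
    exact hne (Set.ext h)
  refine ⟨?_, ?_⟩
  · rcases x with ⟨_, j⟩ | l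
    · have := j.isLt
      omega
    · have := l.isLt
      omega
  · rw [eq_inter hA hB hρ, eq_inter hA' hB' hσ] at hx
    by_cases hxT : x ∈ T
    · by_cases hxρ : x ∈ canonical w ρ
      · exact exists_row_subset hn cρ cσ hxT hxρ fun h => hx (by tauto)
      · exact exists_row_subset hn cσ cρ hxT (by tauto) hxρ
    · tauto

/-- Let `k ≥ 1` and let `𝒜·ℬ` be a rectangle in `G_k` (with
`q = 2k(k-1)` and `w` a bijective enumeration of all 2-clauses) containing at least
one canonical solution. Then either `𝒜` or `ℬ` contains at most one useful set. -/
theorem stmt_14 (k q : ℕ) (hk : 1 ≤ k) (hq : q = 2 * k * (k - 1))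
    (w : Fin q → ClauseT k) (hw : Function.Bijective w)
    (𝒜 ℬ : Set (Set (Vtx k q))) (hrect : IsRectangle w 𝒜 ℬ)
    (hcanon : ∃ A ∈ 𝒜, ∃ B ∈ ℬ, ∃ ρ : Fin k → Bool, A ∪ B = canonical w ρ) :
    {A | UsefulA w 𝒜 ℬ A}.Subsingleton ∨ {B | UsefulB w 𝒜 ℬ B}.Subsingleton := by
  obtain ⟨-, -, hr⟩ := hrect
  obtain ⟨A₀, hA₀, B₀, hB₀, ρ, hρ⟩ := hcanon
  have hd : Disjoint (⋃₀ 𝒜) (⋃₀ ℬ) := by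
    rw [Set.disjoint_left]
    rintro x ⟨A, hA, hxA⟩ ⟨B, hB, hxB⟩
    exact Set.disjoint_left.1 (hr A hA B hB).1 hxA hxB
  have hn : ∀ u ∈ ⋃₀ 𝒜, ∀ v ∈ ⋃₀ ℬ, ¬ GAdj w u v := by
    rintro u ⟨A, hA, hu⟩ v ⟨B, hB, hv⟩
    exact (hr A hA B hB).2 u hu v hv
  have hn' : ∀ u ∈ ⋃₀ ℬ, ∀ v ∈ ⋃₀ 𝒜, ¬ GAdj w u v := fun u hu v hv h => hn v hv u hu h.symm
  have cρ : canonical w ρ ⊆ ⋃₀ 𝒜 ∪ ⋃₀ ℬ := hρ ▸ Set.union_subset_union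
    (Set.subset_sUnion_of_mem hA₀) (Set.subset_sUnion_of_mem hB₀)
  by_contra hcon
  rw [not_or, Set.not_subsingleton_iff, Set.not_subsingleton_iff] at hcon
  obtain ⟨⟨A₁, ⟨hA₁, B₁, hB₁, ρ₁, h₁⟩, A₂, ⟨hA₂, B₂, hB₂, ρ₂, h₂⟩, hA⟩,
    ⟨B₃, ⟨hB₃, A₃, hA₃, ρ₃, h₃⟩, B₄, ⟨hB₄, A₄, hA₄, ρ₄, h₄⟩, hB⟩⟩ := hcon
  obtain ⟨hq0, i, hi⟩ := exists_row_subset_of_ne hd hn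
    (Set.subset_sUnion_of_mem hA₁) (Set.subset_sUnion_of_mem hA₂)
    (Set.subset_sUnion_of_mem hB₁) (Set.subset_sUnion_of_mem hB₂) h₁ h₂ hA
  obtain ⟨-, j, hj⟩ := exists_row_subset_of_ne hd.symm hn'
    (Set.subset_sUnion_of_mem hB₃) (Set.subset_sUnion_of_mem hB₄)
    (Set.subset_sUnion_of_mem hA₃) (Set.subset_sUnion_of_mem hA₄)
    ((Set.union_comm _ _).trans h₃) ((Set.union_comm _ _).trans h₄) hB
  rcases lt_trichotomy i j with h | rfl | h
  · exact not_rows_separated hw.2 hn cρ h hi hj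
  · exact Set.disjoint_left.1 hd (hi ⟨0, by omega⟩) (hj ⟨0, by omega⟩)
  · exact not_rows_separated hw.2 hn' (Set.union_comm _ _ ▸ cρ) h hj hi
end
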